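/- arXiv:1609.08342 — 5 statements merged into one kernel-verified Lean document; each statement's English description precedes it below -/
import Mathlib

section
/- For every m>0 one has Λ(m) ≤ 4(1+m)²(2+4m+m²)^{3/2} / (√2 · π · (m(m+2))³). In particular Λ(m) is finite for every m>0 and Λ(m) → 0 as m → ∞. -/
open MeasureTheory Real Filter Topology
open scoped InnerProductSpace ENNReal

noncomputable section

/-- Three-dimensional Euclidean space. -/
abbrev R3 := EuclideanSpace ℝ (Fin 3)

/-- The kernel `G(q₁,…,q_N)` (here with `N` arguments indexed by `Fin N`). -/
def Gker (m μ : ℝ) {N : ℕ} (q : Fin N → R3) : ℝ :=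
  (∑ i, ‖q i‖ ^ 2 + (2 / (m + 1)) * ∑ i, ∑ j ∈ Finset.Ioi i, ⟪q i, q j⟫_ℝ + μ)⁻¹

/-- The function `L(q₁,…,q_{N-1})` (here with `N` arguments indexed by `Fin N`). -/
def Lker (m μ : ℝ) {N : ℕ} (q : Fin N → R3) : ℝ :=
  2 * π ^ 2 * Real.sqrt ((m * (m + 2) / (m + 1) ^ 2) * ∑ i, ‖q i‖ ^ 2
    + (2 * m / (m + 1) ^ 2) * ∑ i, ∑ j ∈ Finset.Ioi i, ⟪q i, q j⟫_ℝ + μ)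

/-- `ℓ_m(s,K,Q)`. -/
def ellm (m : ℝ) (s K : R3) (Q : ℝ) : ℝ :=
  Real.sqrt (m / (m + 1) ^ 2 * ‖s + K‖ ^ 2 + m / (m + 1) * (‖s‖ ^ 2 + Q ^ 2))

/-- The quantity `D(s,t,K,Q)`. -/
def Dker (m : ℝ) (s t K : R3) (Q : ℝ) : ℝ :=
  |⟪s + (2 + m)⁻¹ • K, t + (2 + m)⁻¹ • K⟫_ℝ| /
    ((‖s + (2 + m)⁻¹ • K‖ ^ 2 + ‖t + (2 + m)⁻¹ • K‖ ^ 2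
        + m / (1 + m) * (Q ^ 2 + (2 + m)⁻¹ * ‖K‖ ^ 2)) ^ 2
      - ((2 / (1 + m)) * ⟪s + (2 + m)⁻¹ • K, t + (2 + m)⁻¹ • K⟫_ℝ) ^ 2)

/-- `Λ(m)`, as a supremum in the extended nonnegative reals. -/
def Lam (m : ℝ) : ℝ≥0∞ :=
  ⨆ (s : R3) (K : R3) (Q : ℝ) (_ : 0 < Q),
    ENNReal.ofReal ((‖s‖ ^ 2 + Q ^ 2) / (π ^ 2 * (1 + m)) / Real.sqrt (ellm m s K Q)) *
      ∫⁻ t : R3, ENNReal.ofReal (Dker m s t K Q / (‖t‖ ^ 2 * Real.sqrt (ellm m t K Q)))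

theorem ENNReal.mul_add_mul_le_mul_add_mul {a b c d : ℝ≥0∞} (hba : b ≤ a) (hdc : d ≤ c) :
    a * d + b * c ≤ a * c + b * d := by
  obtain ⟨e, rfl⟩ := exists_add_of_le hba
  calc (b + e) * d + b * c = b * d + b * c + e * d := by ring
    _ ≤ b * d + b * c + e * c := by gcongr
    _ = (b + e) * c + b * d := by ring

section Rearrangement

variable {E : Type*} [NormedAddCommGroup E] [MeasurableSpace E] [BorelSpace E]
  (μ : Measure E) [μ.IsAddLeftInvariant] [μ.IsAddRightInvariant] [μ.IsNegInvariant]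

/-- Translating one of two radially decreasing functions does not increase the integral of their
product. -/
theorem lintegral_norm_mul_norm_add_le {F G : ℝ → ℝ≥0∞} (hFm : Measurable F) (hGm : Measurable G)
    (hF : AntitoneOn F (Set.Ici 0)) (hG : AntitoneOn G (Set.Ici 0)) (v : E) :
    ∫⁻ t, F ‖t‖ * G ‖t + v‖ ∂μ ≤ ∫⁻ t, F ‖t‖ * G ‖t‖ ∂μ := by
  have hpt : ∀ t : E, F ‖t‖ * G ‖t + v‖ + F ‖t + v‖ * G ‖t‖ ≤
      F ‖t‖ * G ‖t‖ + F ‖t + v‖ * G ‖t + v‖ := by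
    intro t
    have ht : ‖t‖ ∈ Set.Ici (0 : ℝ) := norm_nonneg _
    have htv : ‖t + v‖ ∈ Set.Ici (0 : ℝ) := norm_nonneg _
    rcases le_total ‖t‖ ‖t + v‖ with h | h
    · exact ENNReal.mul_add_mul_le_mul_add_mul (hF ht htv h) (hG ht htv h)
    · rw [add_comm, add_comm (F ‖t‖ * G ‖t‖)]
      exact ENNReal.mul_add_mul_le_mul_add_mul (hF htv ht h) (hG htv ht h)
  have hint := lintegral_mono (μ := μ) hpt
  rw [lintegral_add_left (by fun_prop), lintegral_add_left (by fun_prop),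
    lintegral_add_right_eq_self (fun t : E ↦ F ‖t‖ * G ‖t‖) v] at hint
  have hswap : ∫⁻ t, F ‖t + v‖ * G ‖t‖ ∂μ = ∫⁻ t, F ‖t‖ * G ‖t + v‖ ∂μ := by
    rw [← lintegral_sub_left_eq_self _ (-v)]
    refine lintegral_congr fun t ↦ ?_
    rw [show -v - t + v = -t by abel, show -v - t = -(t + v) by abel, norm_neg, norm_neg]
  rw [hswap, ← two_mul, ← two_mul] at hint
  exact (ENNReal.mul_le_mul_iff_right two_ne_zero ENNReal.ofNat_ne_top).1 hint

end Rearrangement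

theorem hasDerivAt_div_sqrt_add_sq {a : ℝ} (ha : 0 < a) (x : ℝ) :
    HasDerivAt (fun r ↦ r / (a * √(a + r ^ 2))) (1 / ((a + x ^ 2) * √(a + x ^ 2))) x := by
  have hpos : 0 < a + x ^ 2 := by positivity
  have hs : 0 < √(a + x ^ 2) := Real.sqrt_pos.2 hpos
  have hsq : √(a + x ^ 2) ^ 2 = a + x ^ 2 := Real.sq_sqrt hpos.le
  have hin : HasDerivAt (fun r : ℝ ↦ a + r ^ 2) (2 * x) x := by
    simpa using (hasDerivAt_pow 2 x).const_add a
  have hd := (hasDerivAt_id x).div ((hin.sqrt hpos.ne').const_mul a) (by positivity)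
  refine hd.congr_deriv ?_
  simp only [id]
  rw [← hsq]
  set w := √(a + x ^ 2)
  rw [Real.sqrt_sq hs.le]
  field_simp
  linarith

theorem tendsto_div_sqrt_add_sq_atTop {a : ℝ} (ha : 0 < a) :
    Tendsto (fun r ↦ r / (a * √(a + r ^ 2))) atTop (𝓝 (1 / a)) := by
  have h1 : Tendsto (fun r : ℝ ↦ a * (r ^ 2)⁻¹ + 1) atTop (𝓝 (a * 0 + 1)) :=
    ((tendsto_inv_atTop_zero.comp (tendsto_pow_atTop two_ne_zero)).const_mul a).add_const 1
  have h2 : Tendsto (fun r : ℝ ↦ 1 / (a * √(a * (r ^ 2)⁻¹ + 1))) atTop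
      (𝓝 (1 / (a * √(a * 0 + 1)))) := by
    refine Tendsto.div tendsto_const_nhds (h1.sqrt.const_mul a) ?_
    simp [ha.ne']
  simp only [mul_zero, zero_add, Real.sqrt_one, mul_one] at h2
  refine h2.congr' ?_
  filter_upwards [eventually_gt_atTop 0] with r hr
  have : a + r ^ 2 = (a * (r ^ 2)⁻¹ + 1) * r ^ 2 := by field_simp
  rw [this, Real.sqrt_mul (by positivity), Real.sqrt_sq hr.le]
  field_simp

theorem lintegral_inv_norm_sq_mul {a : ℝ} (ha : 0 < a) :
    ∫⁻ t : R3, ENNReal.ofReal (1 / (‖t‖ ^ 2 * ((a + ‖t‖ ^ 2) * √(a + ‖t‖ ^ 2)))) =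
      ENNReal.ofReal (4 * π / a) := by
  let f : ℝ → ℝ := fun r ↦ 1 / (r ^ 2 * ((a + r ^ 2) * √(a + r ^ 2)))
  have hdim : Module.finrank ℝ R3 - 1 = 2 := by simp
  have hcongr : Set.EqOn (fun y : ℝ ↦ y ^ (Module.finrank ℝ R3 - 1) • f y)
      (fun y ↦ 1 / ((a + y ^ 2) * √(a + y ^ 2))) (Set.Ioi 0) := by
    intro y hy
    have hy : 0 < y := hy
    have : 0 < √(a + y ^ 2) := Real.sqrt_pos.2 (by positivity)
    simp only [hdim, f, smul_eq_mul]
    field_simp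
  have hnn : ∀ x ∈ Set.Ioi (0 : ℝ), 0 ≤ 1 / ((a + x ^ 2) * √(a + x ^ 2)) :=
    fun x _ ↦ by positivity
  have hint : Integrable (fun t : R3 ↦ f ‖t‖) := by
    rw [integrable_fun_norm_addHaar volume, integrableOn_congr_fun hcongr measurableSet_Ioi]
    exact integrableOn_Ioi_deriv_of_nonneg' (fun x _ ↦ hasDerivAt_div_sqrt_add_sq ha x) hnn
      (tendsto_div_sqrt_add_sq_atTop ha)
  have hvol : (volume : Measure R3).real (Metric.ball 0 1) = π * 4 / 3 := by
    rw [Measure.real, EuclideanSpace.volume_ball_fin_three]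
    simp [ENNReal.toReal_ofReal (show 0 ≤ π * 4 / 3 by positivity)]
  have hval : ∫ t : R3, f ‖t‖ = 4 * π / a := by
    rw [integral_fun_norm_addHaar volume, setIntegral_congr_fun measurableSet_Ioi hcongr,
      integral_Ioi_of_hasDerivAt_of_nonneg' (fun x _ ↦ hasDerivAt_div_sqrt_add_sq ha x) hnn
        (tendsto_div_sqrt_add_sq_atTop ha), hvol]
    simp
    field_simp
  rw [← hval, ofReal_integral_eq_lintegral_ofReal hint]
  exact Eventually.of_forall fun t ↦ by simp only [f, Pi.zero_apply]; positivity

theorem lintegral_inv_norm_sq_mul_translate_le {a : ℝ} (ha : 0 < a) (v : R3) :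
    ∫⁻ t : R3, ENNReal.ofReal (1 / (‖t‖ ^ 2 * ((a + ‖t + v‖ ^ 2) * √(a + ‖t + v‖ ^ 2)))) ≤
      ENNReal.ofReal (4 * π / a) := by
  let F : ℝ → ℝ≥0∞ := fun r ↦ (ENNReal.ofReal (r ^ 2))⁻¹
  let G : ℝ → ℝ≥0∞ := fun r ↦ ENNReal.ofReal (1 / ((a + r ^ 2) * √(a + r ^ 2)))
  have hF : AntitoneOn F (Set.Ici 0) := fun x hx y _ hxy ↦
    ENNReal.inv_le_inv.2 (ENNReal.ofReal_le_ofReal (pow_le_pow_left₀ hx hxy 2))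
  have hG : AntitoneOn G (Set.Ici 0) := by
    intro x hx y _ hxy
    have hx : 0 ≤ x := hx
    have : 0 < √(a + x ^ 2) := Real.sqrt_pos.2 (by positivity)
    refine ENNReal.ofReal_le_ofReal ?_
    gcongr
  have hsplit : ∀ t w : R3, t ≠ 0 →
      ENNReal.ofReal (1 / (‖t‖ ^ 2 * ((a + ‖w‖ ^ 2) * √(a + ‖w‖ ^ 2)))) = F ‖t‖ * G ‖w‖ := by
    intro t w ht
    have : 0 < ‖t‖ ^ 2 := by positivity
    simp only [F, G]
    rw [← ENNReal.ofReal_inv_of_pos this, ← ENNReal.ofReal_mul (by positivity)]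
    congr 1
    rw [one_div, one_div, mul_inv]
  have hne : ∀ᵐ t : R3, t ≠ 0 := Measure.ae_ne volume 0
  calc _ = ∫⁻ t : R3, F ‖t‖ * G ‖t + v‖ :=
        lintegral_congr_ae (hne.mono fun t ht ↦ hsplit t (t + v) ht)
    _ ≤ ∫⁻ t : R3, F ‖t‖ * G ‖t‖ :=
        lintegral_norm_mul_norm_add_le volume (by fun_prop) (by fun_prop) hF hG v
    _ = ∫⁻ t : R3, ENNReal.ofReal (1 / (‖t‖ ^ 2 * ((a + ‖t‖ ^ 2) * √(a + ‖t‖ ^ 2)))) :=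
        lintegral_congr_ae (hne.mono fun t ht ↦ (hsplit t t ht).symm)
    _ = _ := lintegral_inv_norm_sq_mul ha

theorem ellm_eq_sqrt {m : ℝ} (hm : 0 < m) (s K : R3) (Q : ℝ) :
    ellm m s K Q = √(m * (m + 2) / (m + 1) ^ 2 * ‖s + (2 + m)⁻¹ • K‖ ^ 2 +
      m / (1 + m) * (Q ^ 2 + (2 + m)⁻¹ * ‖K‖ ^ 2)) := by
  rw [ellm]
  congr 1
  rw [norm_add_sq_real, norm_add_sq_real, inner_smul_right, norm_smul, Real.norm_eq_abs,
    abs_of_pos (by positivity)]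
  rw [add_comm m 1, add_comm m 2]
  field_simp
  ring

theorem div_four_sub_sq_le {c p q M y X δ : ℝ} (hc : 0 < c) (hcδ : c = 1 - δ ^ 2)
    (hp : 0 ≤ p) (hq : 0 ≤ q) (hX : X = p ^ 2 + q ^ 2 + M) (hM : 0 < M) (hy : |y| ≤ p * q) :
    |y| / (X ^ 2 - (2 * δ * y) ^ 2) ≤ p * q / (c * X ^ 2) := by
  have hX0 : 0 < X := by rw [hX]; positivity
  have h2 : 2 * |y| ≤ X := by nlinarith [sq_nonneg (p - q)]
  have h3 : (2 * |y|) ^ 2 ≤ X ^ 2 := by gcongr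
  have h4 : (2 * y) ^ 2 ≤ X ^ 2 := by rw [mul_pow, sq_abs] at h3; linarith
  have h5 : c * X ^ 2 ≤ X ^ 2 - (2 * δ * y) ^ 2 := by
    rw [hcδ]; nlinarith [mul_le_mul_of_nonneg_left h4 (sq_nonneg δ)]
  have : 0 < c * X ^ 2 := by positivity
  gcongr

/-- The weight inequality behind the pointwise bound, with `u = √ℓ(s)` and `w = √ℓ(t)`. -/
theorem sqrt_two_mul_cube_mul_le {c p q M u w X : ℝ} (hc : 0 < c) (hc1 : c ≤ 1) (hp : 0 ≤ p)
    (hq : 0 ≤ q) (hM : 0 < M) (hu : 0 ≤ u) (hw : 0 ≤ w) (hu4 : u ^ 4 = c * p ^ 2 + M)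
    (hw4 : w ^ 4 = c * q ^ 2 + M) (hX : X = p ^ 2 + q ^ 2 + M) :
    √2 * √c * (u ^ 3 * p * q) ≤ (p ^ 2 + M) * √X * w := by
  have hX0 : 0 < X := by rw [hX]; positivity
  have hcs : √c ^ 2 = c := Real.sq_sqrt hc.le
  have hcu : √c * p ≤ u ^ 2 := by
    refine (sq_le_sq₀ (by positivity) (by positivity)).1 ?_
    rw [mul_pow, hcs]; nlinarith
  have hcw : √c * q ≤ w ^ 2 := by
    refine (sq_le_sq₀ (by positivity) (by positivity)).1 ?_
    rw [mul_pow, hcs]; nlinarith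
  have hu8 : u ^ 4 ≤ p ^ 2 + M := by rw [hu4]; nlinarith [sq_nonneg p]
  have hpq : 2 * (p * q) ≤ X := by nlinarith [sq_nonneg (p - q)]
  refine (sq_le_sq₀ (by positivity) (by positivity)).1 ?_
  calc (√2 * √c * (u ^ 3 * p * q)) ^ 2
      = √2 ^ 2 * (p * q) * (√c * q) * (√c * p) * u ^ 6 := by ring
    _ = 2 * (p * q) * (√c * q) * (√c * p) * u ^ 6 := by rw [Real.sq_sqrt zero_le_two]
    _ ≤ X * w ^ 2 * u ^ 2 * u ^ 6 := by gcongr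
    _ = X * w ^ 2 * (u ^ 4) ^ 2 := by ring
    _ ≤ X * w ^ 2 * (p ^ 2 + M) ^ 2 := by gcongr
    _ = ((p ^ 2 + M) * √X * w) ^ 2 := by rw [mul_pow, mul_pow, Real.sq_sqrt hX0.le]; ring

theorem Lam_integrand_le {m : ℝ} (hm : 0 < m) (s t K : R3) {Q : ℝ} (hQ : 0 < Q) :
    (‖s‖ ^ 2 + Q ^ 2) / (π ^ 2 * (1 + m)) / √(ellm m s K Q) *
        (Dker m s t K Q / (‖t‖ ^ 2 * √(ellm m t K Q))) ≤
      (‖s + (2 + m)⁻¹ • K‖ ^ 2 + m / (1 + m) * (Q ^ 2 + (2 + m)⁻¹ * ‖K‖ ^ 2)) /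
        (π ^ 2 * m * √2 * (m * (m + 2) / (m + 1) ^ 2 * √(m * (m + 2) / (m + 1) ^ 2))) *
      (1 / (‖t‖ ^ 2 *
        ((‖s + (2 + m)⁻¹ • K‖ ^ 2 + m / (1 + m) * (Q ^ 2 + (2 + m)⁻¹ * ‖K‖ ^ 2) +
          ‖t + (2 + m)⁻¹ • K‖ ^ 2) *
        √(‖s + (2 + m)⁻¹ • K‖ ^ 2 + m / (1 + m) * (Q ^ 2 + (2 + m)⁻¹ * ‖K‖ ^ 2) +
          ‖t + (2 + m)⁻¹ • K‖ ^ 2)))) := by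
  have hsq : m / (m + 1) * (‖s‖ ^ 2 + Q ^ 2) ≤ ellm m s K Q ^ 2 := by
    rw [ellm, Real.sq_sqrt (by positivity)]
    exact le_add_of_nonneg_left (by positivity)
  have hsQ : 0 ≤ ‖s‖ ^ 2 + Q ^ 2 := by positivity
  have hls := ellm_eq_sqrt hm s K Q
  have hlt := ellm_eq_sqrt hm t K Q
  have hy := abs_real_inner_le_norm (s + (2 + m)⁻¹ • K) (t + (2 + m)⁻¹ • K)
  have hc : 0 < m * (m + 2) / (m + 1) ^ 2 := by positivity
  have hcδ : m * (m + 2) / (m + 1) ^ 2 = 1 - (1 / (1 + m)) ^ 2 := by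
    rw [add_comm m 1]; field_simp; ring
  have hc1 : m * (m + 2) / (m + 1) ^ 2 ≤ 1 := by rw [hcδ]; linarith [sq_nonneg (1 / (1 + m))]
  have hM : 0 < m / (1 + m) * (Q ^ 2 + (2 + m)⁻¹ * ‖K‖ ^ 2) := by positivity
  have hp := norm_nonneg (s + (2 + m)⁻¹ • K)
  have hq := norm_nonneg (t + (2 + m)⁻¹ • K)
  have hT : 0 ≤ ‖t‖ ^ 2 := by positivity
  rw [Dker]
  generalize ⟪s + (2 + m)⁻¹ • K, t + (2 + m)⁻¹ • K⟫_ℝ = y at *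
  generalize ‖s + (2 + m)⁻¹ • K‖ = p at *
  generalize ‖t + (2 + m)⁻¹ • K‖ = q at *
  generalize m / (1 + m) * (Q ^ 2 + (2 + m)⁻¹ * ‖K‖ ^ 2) = M at *
  generalize m * (m + 2) / (m + 1) ^ 2 = c at *
  generalize ‖s‖ ^ 2 + Q ^ 2 = S at *
  generalize ‖t‖ ^ 2 = T at *
  have hl0 : ∀ r : ℝ, 0 < c * r ^ 2 + M := fun r ↦ by positivity
  have hu : 0 < √(ellm m s K Q) := by rw [hls]; exact Real.sqrt_pos.2 (Real.sqrt_pos.2 (hl0 p))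
  have hw : 0 < √(ellm m t K Q) := by rw [hlt]; exact Real.sqrt_pos.2 (Real.sqrt_pos.2 (hl0 q))
  have hu2 : √(ellm m s K Q) ^ 2 = ellm m s K Q := Real.sq_sqrt (by rw [hls]; positivity)
  have hw2 : √(ellm m t K Q) ^ 2 = ellm m t K Q := Real.sq_sqrt (by rw [hlt]; positivity)
  have hu4 : √(ellm m s K Q) ^ 4 = c * p ^ 2 + M := by
    rw [show 4 = 2 * 2 from rfl, pow_mul, hu2, hls, Real.sq_sqrt (hl0 p).le]
  have hw4 : √(ellm m t K Q) ^ 4 = c * q ^ 2 + M := by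
    rw [show 4 = 2 * 2 from rfl, pow_mul, hw2, hlt, Real.sq_sqrt (hl0 q).le]
  rw [← hu2] at hsq
  generalize √(ellm m s K Q) = u at *
  generalize √(ellm m t K Q) = w at *
  obtain ⟨X, hX⟩ : ∃ X, X = p ^ 2 + q ^ 2 + M := ⟨_, rfl⟩
  have hX0 : 0 < X := by rw [hX]; positivity
  have hXs : 0 < √X := Real.sqrt_pos.2 hX0
  have hXX : √X ^ 2 = X := Real.sq_sqrt hX0.le
  have hcs : 0 < √c := Real.sqrt_pos.2 hc
  have hD := div_four_sub_sq_le hc hcδ hp hq hX hM hy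
  have hW := sqrt_two_mul_cube_mul_le hc hc1 hp hq hM hu.le hw.le hu4 hw4 hX
  have hS : S / (1 + m) ≤ u ^ 4 / m := by
    rw [add_comm m 1] at hsq
    rw [le_div_iff₀ hm]
    calc S / (1 + m) * m = m / (1 + m) * S := by ring
      _ ≤ (u ^ 2) ^ 2 := hsq
      _ = u ^ 4 := by ring
  rw [← hX, show p ^ 2 + M + q ^ 2 = X by rw [hX]; ring,
    show 2 / (1 + m) * y = 2 * (1 / (1 + m)) * y by ring]
  rcases hT.eq_or_lt with rfl | hT
  · simp
  calc S / (π ^ 2 * (1 + m)) / u *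
        (|y| / (X ^ 2 - (2 * (1 / (1 + m)) * y) ^ 2) / (T * w))
      = S / (1 + m) / π ^ 2 / u *
        (|y| / (X ^ 2 - (2 * (1 / (1 + m)) * y) ^ 2) / (T * w)) := by
        rw [div_div S (1 + m), mul_comm (π ^ 2)]
    _ ≤ S / (1 + m) / π ^ 2 / u * (p * q / (c * X ^ 2) / (T * w)) := by gcongr
    _ ≤ u ^ 4 / m / π ^ 2 / u * (p * q / (c * X ^ 2) / (T * w)) := by gcongr
    _ = √2 * √c * (u ^ 3 * p * q) / (√2 * √c * m * π ^ 2 * c * X ^ 2 * T * w) := by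
        field_simp
    _ ≤ (p ^ 2 + M) * √X * w / (√2 * √c * m * π ^ 2 * c * X ^ 2 * T * w) := by gcongr
    _ = (p ^ 2 + M) / (π ^ 2 * m * √2 * (c * √c)) * (1 / (T * (X * √X))) := by
        field_simp
        rw [hXX]

theorem Lam_le {m : ℝ} (hm : 0 < m) :
    Lam m ≤ ENNReal.ofReal (4 / (π * m * √2 *
      (m * (m + 2) / (m + 1) ^ 2 * √(m * (m + 2) / (m + 1) ^ 2)))) := by
  refine iSup_le fun s ↦ iSup_le fun K ↦ iSup_le fun Q ↦ iSup_le fun hQ ↦ ?_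
  have ha : 0 < ‖s + (2 + m)⁻¹ • K‖ ^ 2 + m / (1 + m) * (Q ^ 2 + (2 + m)⁻¹ * ‖K‖ ^ 2) := by
    positivity
  have hc : 0 < m * (m + 2) / (m + 1) ^ 2 := by positivity
  have hint := lintegral_inv_norm_sq_mul_translate_le ha ((2 + m)⁻¹ • K)
  have hpt := fun t ↦ Lam_integrand_le hm s t K hQ
  generalize ‖s + (2 + m)⁻¹ • K‖ ^ 2 + m / (1 + m) * (Q ^ 2 + (2 + m)⁻¹ * ‖K‖ ^ 2) = a at *
  generalize m * (m + 2) / (m + 1) ^ 2 = c at *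
  have hcs : 0 < √c := Real.sqrt_pos.2 hc
  rw [← lintegral_const_mul' _ _ ENNReal.ofReal_ne_top]
  calc _ ≤ ∫⁻ t : R3, ENNReal.ofReal (a / (π ^ 2 * m * √2 * (c * √c))) * ENNReal.ofReal
          (1 / (‖t‖ ^ 2 * ((a + ‖t + (2 + m)⁻¹ • K‖ ^ 2) * √(a + ‖t + (2 + m)⁻¹ • K‖ ^ 2)))) := by
        refine lintegral_mono fun t ↦ ?_
        rw [← ENNReal.ofReal_mul (by positivity), ← ENNReal.ofReal_mul (by positivity)]
        exact ENNReal.ofReal_le_ofReal (hpt t)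
    _ ≤ ENNReal.ofReal (a / (π ^ 2 * m * √2 * (c * √c))) * ENNReal.ofReal (4 * π / a) := by
        rw [lintegral_const_mul' _ _ ENNReal.ofReal_ne_top]
        gcongr
    _ = _ := by
        rw [← ENNReal.ofReal_mul (by positivity)]
        congr 1
        field_simp

theorem Lam_bound_le_explicit {m : ℝ} (hm : 0 < m) :
    4 / (π * m * √2 * (m * (m + 2) / (m + 1) ^ 2 * √(m * (m + 2) / (m + 1) ^ 2))) ≤
      4 * (1 + m) ^ 2 * (2 + 4 * m + m ^ 2) ^ ((3 : ℝ) / 2) /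
        (√2 * π * (m * (m + 2)) ^ 3) := by
  have hE : 0 < 2 + 4 * m + m ^ 2 := by positivity
  have hh : 0 < m * (m + 2) := by positivity
  have hrpow : (2 + 4 * m + m ^ 2) ^ ((3 : ℝ) / 2) =
      (2 + 4 * m + m ^ 2) * √(2 + 4 * m + m ^ 2) := by
    rw [show (3 : ℝ) / 2 = 1 + 1 / 2 by norm_num, Real.rpow_add hE, Real.rpow_one,
      Real.sqrt_eq_rpow]
  have hle : m * (m + 2) ≤ 2 + 4 * m + m ^ 2 := by nlinarith
  have hsqrt : √(m * (m + 2)) ≤ √(2 + 4 * m + m ^ 2) := Real.sqrt_le_sqrt hle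
  have hmul : (1 + m) * (m * (m + 2)) ≤ m * (2 + 4 * m + m ^ 2) := by nlinarith [sq_nonneg m]
  have hs : 0 < √(m * (m + 2)) := Real.sqrt_pos.2 hh
  have hss : √(m * (m + 2)) ^ 2 = m * (m + 2) := Real.sq_sqrt hh.le
  rw [hrpow, Real.sqrt_div hh.le, Real.sqrt_sq (by positivity), add_comm m 1]
  generalize 2 + 4 * m + m ^ 2 = E at *
  generalize m * (m + 2) = h at *
  generalize √h = r at *
  calc 4 / (π * m * √2 * (h / (1 + m) ^ 2 * (r / (1 + m))))
      = 4 * (1 + m) ^ 2 * ((1 + m) * h * r) / (√2 * π * m * (h ^ 2 * r ^ 2)) := by field_simp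
    _ = 4 * (1 + m) ^ 2 * ((1 + m) * h * r) / (√2 * π * m * h ^ 3) := by
        rw [hss]; ring
    _ ≤ 4 * (1 + m) ^ 2 * (m * E * √E) / (√2 * π * m * h ^ 3) := by gcongr
    _ = 4 * (1 + m) ^ 2 * (E * √E) / (√2 * π * h ^ 3) := by field_simp

theorem Lam_le_const_div {m : ℝ} (hm : 1 ≤ m) : Lam m ≤ ENNReal.ofReal (32 / m) := by
  have hm0 : 0 < m := by linarith
  refine (Lam_le hm0).trans (ENNReal.ofReal_le_ofReal ?_)
  have hc : 1 / 4 ≤ m * (m + 2) / (m + 1) ^ 2 := by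
    rw [div_le_div_iff₀ (by norm_num) (by positivity)]
    nlinarith
  have hs : 1 / 2 ≤ √(m * (m + 2) / (m + 1) ^ 2) := Real.le_sqrt_of_sq_le (by linarith)
  have h2 : 1 ≤ √2 := Real.one_le_sqrt.2 one_le_two
  have hπ : 1 ≤ π := by linarith [Real.pi_gt_three]
  calc 4 / (π * m * √2 * (m * (m + 2) / (m + 1) ^ 2 * √(m * (m + 2) / (m + 1) ^ 2)))
      ≤ 4 / (1 * m * 1 * (1 / 4 * (1 / 2))) := by gcongr
    _ = 32 / m := by field_simp; norm_num

/-- the explicit upper bound on `Λ(m)`; in particular `Λ(m)` is finite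
for every `m > 0` and `Λ(m) → 0` as `m → ∞`. -/
theorem Lam_upper_bound :
    (∀ m : ℝ, 0 < m →
      Lam m ≤ ENNReal.ofReal (4 * (1 + m) ^ 2 * (2 + 4 * m + m ^ 2) ^ ((3 : ℝ) / 2)
        / (Real.sqrt 2 * π * (m * (m + 2)) ^ 3))) ∧
    (∀ m : ℝ, 0 < m → Lam m ≠ ⊤) ∧
    Filter.Tendsto Lam Filter.atTop (nhds 0) := by
  refine ⟨fun m hm ↦ (Lam_le hm).trans (ENNReal.ofReal_le_ofReal (Lam_bound_le_explicit hm)),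
    fun m hm ↦ ((Lam_le hm).trans_lt ENNReal.ofReal_lt_top).ne, ?_⟩
  have hlim : Tendsto (fun m : ℝ ↦ ENNReal.ofReal (32 / m)) atTop (𝓝 0) := by
    simpa using ENNReal.tendsto_ofReal (tendsto_const_nhds.div_atTop tendsto_id)
  refine tendsto_of_tendsto_of_tendsto_of_le_of_le' tendsto_const_nhds hlim
    (Eventually.of_forall fun _ ↦ zero_le) ?_
  filter_upwards [eventually_ge_atTop 1] with m hm using Lam_le_const_div hm
end
end

section
/- Fix m>0, μ>0, N≥2 and q₁,…,q_{N−1}∈ℝ³. Then lim_{K→∞} ∫_{{q_N∈ℝ³ : |q_N|<K}} ( G(q₁,…,q_{N−1},q_N) − 1/|q_N|² ) dq_N = −L(q₁,…,q_{N−1}). -/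
open MeasureTheory Real Filter Topology
open scoped InnerProductSpace ENNReal

noncomputable section

theorem sum_sum_Ioi_inner {ι E : Type*} [Fintype ι] [LinearOrder ι]
    [LocallyFiniteOrderTop ι] [LocallyFiniteOrderBot ι]
    [NormedAddCommGroup E] [InnerProductSpace ℝ E] (q : ι → E) :
    2 * ∑ i, ∑ j ∈ Finset.Ioi i, ⟪q i, q j⟫_ℝ = ‖∑ i, q i‖ ^ 2 - ∑ i, ‖q i‖ ^ 2 := by
  have h := Finset.sum_sum_Ioi_add_eq_sum_sum_off_diag fun i j => ⟪q i, q j⟫_ℝ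
  simp_rw [real_inner_comm, ← two_mul, ← Finset.mul_sum] at h
  rw [h, ← real_inner_self_eq_norm_sq, sum_inner, eq_sub_iff_add_eq, ← Finset.sum_add_distrib]
  refine Finset.sum_congr rfl fun i _ => ?_
  rw [inner_sum, ← Finset.sum_compl_add_sum {i}]
  simp

theorem Gker_snoc (m μ : ℝ) (hm : 0 < m) {n : ℕ} (q : Fin n → R3) (t : R3) :
    Gker m μ (Fin.snoc q t : Fin (n + 1) → R3) =
      (‖t + (m + 1)⁻¹ • ∑ i, q i‖ ^ 2 + ((m * (m + 2) / (m + 1) ^ 2) * ∑ i, ‖q i‖ ^ 2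
        + (2 * m / (m + 1) ^ 2) * ∑ i, ∑ j ∈ Finset.Ioi i, ⟪q i, q j⟫_ℝ + μ))⁻¹ := by
  have h₁ := sum_sum_Ioi_inner (Fin.snoc q t : Fin (n + 1) → R3)
  have h₂ := sum_sum_Ioi_inner q
  have hm' : m + 1 ≠ 0 := by positivity
  unfold Gker
  simp only [Fin.sum_univ_castSucc (n := n), Fin.snoc_castSucc, Fin.snoc_last] at h₁ ⊢
  have e₁ : ∀ x : ℝ, 2 / (m + 1) * x = (m + 1)⁻¹ * (2 * x) := fun x => by ring
  have e₂ : ∀ x : ℝ, 2 * m / (m + 1) ^ 2 * x = m / (m + 1) ^ 2 * (2 * x) := fun x => by ring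
  rw [e₁, e₂, h₁, h₂, add_comm (∑ i, q i), norm_add_sq_real, norm_add_sq_real, norm_smul,
    inner_smul_right, Real.norm_of_nonneg (by positivity)]
  congr 1
  field_simp
  ring

theorem Lker_radicand_pos (m μ : ℝ) (hm : 0 < m) (hμ : 0 < μ) {n : ℕ} (q : Fin n → R3) :
    0 < (m * (m + 2) / (m + 1) ^ 2) * ∑ i, ‖q i‖ ^ 2
        + (2 * m / (m + 1) ^ 2) * ∑ i, ∑ j ∈ Finset.Ioi i, ⟪q i, q j⟫_ℝ + μ := by
  have h : (m * (m + 2) / (m + 1) ^ 2) * ∑ i, ‖q i‖ ^ 2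
        + (2 * m / (m + 1) ^ 2) * ∑ i, ∑ j ∈ Finset.Ioi i, ⟪q i, q j⟫_ℝ =
      m / (m + 1) * ∑ i, ‖q i‖ ^ 2 + m / (m + 1) ^ 2 * ‖∑ i, q i‖ ^ 2 := by
    rw [show 2 * m / (m + 1) ^ 2 = m / (m + 1) ^ 2 * 2 by ring, mul_assoc, sum_sum_Ioi_inner]
    field_simp
    ring
  rw [h]
  positivity

theorem measureReal_ball_R3 (x : R3) {r : ℝ} (hr : 0 ≤ r) :
    volume.real (Metric.ball x r) = 4 / 3 * π * r ^ 3 := by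
  rw [measureReal_def, EuclideanSpace.volume_ball_fin_three, ← ENNReal.ofReal_pow hr,
    ← ENNReal.ofReal_mul (by positivity), ENNReal.toReal_ofReal (by positivity)]
  ring

theorem integrableOn_and_integral_Ioi_inv_sq_add_sq {c : ℝ} (hc : 0 < c) :
    IntegrableOn (fun y : ℝ => (y ^ 2 + c ^ 2)⁻¹) (Set.Ioi 0) ∧
      ∫ y in Set.Ioi (0 : ℝ), (y ^ 2 + c ^ 2)⁻¹ = π / (2 * c) := by
  have h : (fun y : ℝ => (y ^ 2 + c ^ 2)⁻¹) =
      fun y => (c ^ 2)⁻¹ * (1 + (c⁻¹ * y) ^ 2)⁻¹ := by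
    funext y
    field_simp
    ring
  rw [h]
  constructor
  · exact ((integrable_inv_one_add_sq.comp_mul_left' (inv_ne_zero hc.ne')).const_mul _).integrableOn
  · rw [integral_const_mul,
      integral_comp_mul_left_Ioi (fun y => (1 + y ^ 2)⁻¹) 0 (inv_pos.2 hc)]
    simp
    field_simp

theorem inv_sq_add_sq_sub_inv_sq_eq {c y : ℝ} (hc : 0 < c) (hy : 0 < y) :
    y ^ 2 • ((y ^ 2 + c ^ 2)⁻¹ - (y ^ 2)⁻¹) = -c ^ 2 * (y ^ 2 + c ^ 2)⁻¹ := by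
  rw [smul_eq_mul]
  field_simp
  ring

theorem integrable_inv_norm_sq_add_sq_sub {c : ℝ} (hc : 0 < c) :
    Integrable fun t : R3 => (‖t‖ ^ 2 + c ^ 2)⁻¹ - (‖t‖ ^ 2)⁻¹ := by
  refine (integrable_fun_norm_addHaar volume
    (f := fun y : ℝ => (y ^ 2 + c ^ 2)⁻¹ - (y ^ 2)⁻¹)).2 ?_
  rw [finrank_euclideanSpace_fin]
  exact IntegrableOn.congr_fun
    ((integrableOn_and_integral_Ioi_inv_sq_add_sq hc).1.const_mul (-c ^ 2))
    (fun y hy => (inv_sq_add_sq_sub_inv_sq_eq hc hy).symm) measurableSet_Ioi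

theorem integral_inv_norm_sq_add_sq_sub {c : ℝ} (hc : 0 < c) :
    ∫ t : R3, ((‖t‖ ^ 2 + c ^ 2)⁻¹ - (‖t‖ ^ 2)⁻¹) = -(2 * π ^ 2 * c) := by
  rw [integral_fun_norm_addHaar volume (fun y : ℝ => (y ^ 2 + c ^ 2)⁻¹ - (y ^ 2)⁻¹),
    finrank_euclideanSpace_fin, setIntegral_congr_fun measurableSet_Ioi
      (fun y hy => inv_sq_add_sq_sub_inv_sq_eq hc hy), integral_const_mul,
    (integrableOn_and_integral_Ioi_inv_sq_add_sq hc).2, measureReal_ball_R3 0 zero_le_one]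
  simp only [nsmul_eq_mul, smul_eq_mul]
  push_cast
  field_simp
  norm_num

theorem continuous_inv_norm_sq_add_sq {c : ℝ} (hc : 0 < c) :
    Continuous fun t : R3 => (‖t‖ ^ 2 + c ^ 2)⁻¹ :=
  Continuous.inv₀ (by fun_prop) fun t => by positivity

theorem integrableOn_ball_of_continuous {f : R3 → ℝ} (hf : Continuous f) (x : R3) (r : ℝ) :
    IntegrableOn f (Metric.ball x r) :=
  (hf.continuousOn.integrableOn_compact (isCompact_closedBall x r)).mono_set
    Metric.ball_subset_closedBall

theorem setIntegral_ball_comp_add_right (f : R3 → ℝ) (a : R3) (K : ℝ) :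
    ∫ t in Metric.ball (0 : R3) K, f (t + a) = ∫ t in Metric.ball a K, f t := by
  rw [← (measurePreserving_add_right volume a).setIntegral_preimage_emb
    (measurableEmbedding_addRight a) f (Metric.ball a K)]
  congr 2
  ext t
  simp [dist_eq_norm]

theorem abs_inv_sq_add_sq_sub_le {c A K x : ℝ} (hc : 0 < c) (hA : 0 ≤ A)
    (hK : 2 * A + 1 ≤ K) (h₁ : K - A ≤ x) (h₂ : x ≤ K + A) :
    |(x ^ 2 + c ^ 2)⁻¹ - (K ^ 2 + c ^ 2)⁻¹| ≤ 12 * A / K ^ 3 := by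
  have hK0 : 0 < K := by linarith
  have hx : K / 2 ≤ x := by linarith
  have hx0 : 0 < x := by linarith
  rw [inv_sub_inv (by positivity) (by positivity), abs_div,
    abs_of_pos (a := (x ^ 2 + c ^ 2) * (K ^ 2 + c ^ 2)) (by positivity)]
  have hnum : |K ^ 2 + c ^ 2 - (x ^ 2 + c ^ 2)| ≤ 3 * A * K := by
    rw [show K ^ 2 + c ^ 2 - (x ^ 2 + c ^ 2) = (K - x) * (K + x) by ring, abs_mul,
      abs_of_pos (a := K + x) (by positivity), mul_assoc]
    have : |K - x| ≤ A := abs_le.2 ⟨by linarith, by linarith⟩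
    calc |K - x| * (K + x) ≤ A * (3 * K) := by gcongr; linarith
      _ = 3 * (A * K) := by ring
  have hden : (K / 2) ^ 2 * K ^ 2 ≤ (x ^ 2 + c ^ 2) * (K ^ 2 + c ^ 2) := by
    have : (K / 2) ^ 2 ≤ x ^ 2 := by gcongr
    gcongr <;> nlinarith [sq_nonneg c]
  refine (div_le_div₀ (by positivity) hnum (by positivity) hden).trans_eq ?_
  field_simp
  ring

theorem measureReal_shell_le {A K : ℝ} (hA : 0 ≤ A) (hK : 2 * A + 1 ≤ K) :
    volume.real (Metric.ball (0 : R3) (K + A) \ Metric.ball 0 (K - A)) ≤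
      28 / 3 * π * A * K ^ 2 := by
  rw [measureReal_sdiff (Metric.ball_subset_ball (by linarith)) measurableSet_ball,
    measureReal_ball_R3 _ (by linarith), measureReal_ball_R3 _ (by linarith)]
  have : (K + A) ^ 3 - (K - A) ^ 3 ≤ 7 * (A * K ^ 2) := by
    have : A * A ^ 2 ≤ A * (K / 2) ^ 2 := by gcongr; linarith
    nlinarith [mul_nonneg hA (sq_nonneg K)]
  nlinarith [pi_pos]

theorem setIntegral_sub_setIntegral_eq_sdiff {f : R3 → ℝ} {s t : Set R3}
    (hs : MeasurableSet s) (ht : MeasurableSet t) (hfs : IntegrableOn f s)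
    (hft : IntegrableOn f t) :
    (∫ x in s, f x) - ∫ x in t, f x = (∫ x in s \ t, f x) - ∫ x in t \ s, f x := by
  rw [← integral_inter_add_sdiff ht hfs, ← integral_inter_add_sdiff hs hft, Set.inter_comm s t]
  ring

theorem norm_setIntegral_ball_shift_le {c K : ℝ} (hc : 0 < c) (a : R3)
    (hK : 2 * ‖a‖ + 1 ≤ K) :
    ‖∫ t in Metric.ball (0 : R3) K, ((‖t + a‖ ^ 2 + c ^ 2)⁻¹ - (‖t‖ ^ 2 + c ^ 2)⁻¹)‖ ≤
      224 * π * ‖a‖ ^ 2 / K := by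
  have ha := norm_nonneg a
  have hK0 : 0 < K := by linarith
  set f : R3 → ℝ := fun t => (‖t‖ ^ 2 + c ^ 2)⁻¹ - (K ^ 2 + c ^ 2)⁻¹ with hf
  have hfc : Continuous f := (continuous_inv_norm_sq_add_sq hc).sub continuous_const
  have hfi := integrableOn_ball_of_continuous hfc
  set S := Metric.ball (0 : R3) (K + ‖a‖) \ Metric.ball 0 (K - ‖a‖) with hS
  have hbound : ∀ s ⊆ S, ‖∫ t in s, f t‖ ≤ 12 * ‖a‖ / K ^ 3 * (28 / 3 * π * ‖a‖ * K ^ 2) := by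
    intro s hs
    have hStop : volume S ≠ ⊤ :=
      ((measure_mono Set.sdiff_subset).trans_lt measure_ball_lt_top).ne
    refine (norm_setIntegral_le_of_norm_le_const ((measure_mono hs).trans_lt hStop.lt_top)
      fun t ht => ?_).trans (mul_le_mul_of_nonneg_left
        ((measureReal_mono hs hStop).trans (measureReal_shell_le ha hK)) (by positivity))
    have ht' := hs ht
    simp only [hS, Set.mem_sdiff, mem_ball_zero_iff, not_lt] at ht'
    exact abs_inv_sq_add_sq_sub_le hc ha hK ht'.2 ht'.1.le
  have hsub₁ : Metric.ball a K \ Metric.ball 0 K ⊆ S := by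
    intro t ht
    simp only [hS, Set.mem_sdiff, mem_ball_iff_norm, sub_zero, not_lt] at ht ⊢
    have := norm_le_norm_sub_add t a
    exact ⟨by linarith, by linarith⟩
  have hsub₂ : Metric.ball 0 K \ Metric.ball a K ⊆ S := by
    intro t ht
    simp only [hS, Set.mem_sdiff, mem_ball_iff_norm, sub_zero, not_lt] at ht ⊢
    have := norm_sub_le t a
    exact ⟨by linarith, by linarith⟩
  have hshift : IntegrableOn (fun t => f (t + a)) (Metric.ball 0 K) :=
    integrableOn_ball_of_continuous (hfc.comp (continuous_add_const a)) _ _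
  calc _ = ‖∫ t in Metric.ball (0 : R3) K, (f (t + a) - f t)‖ := by simp [hf]
    _ = ‖(∫ t in Metric.ball a K \ Metric.ball 0 K, f t) -
          ∫ t in Metric.ball 0 K \ Metric.ball a K, f t‖ := by
      rw [integral_sub hshift (hfi _ _), setIntegral_ball_comp_add_right,
        setIntegral_sub_setIntegral_eq_sdiff measurableSet_ball measurableSet_ball
          (hfi _ _) (hfi _ _)]
    _ ≤ 12 * ‖a‖ / K ^ 3 * (28 / 3 * π * ‖a‖ * K ^ 2) +
          12 * ‖a‖ / K ^ 3 * (28 / 3 * π * ‖a‖ * K ^ 2) :=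
      (norm_sub_le _ _).trans (add_le_add (hbound _ hsub₁) (hbound _ hsub₂))
    _ = _ := by
      field_simp
      ring

theorem tendsto_setIntegral_ball_shift {c : ℝ} (hc : 0 < c) (a : R3) :
    Tendsto (fun K : ℝ => ∫ t in Metric.ball (0 : R3) K,
      ((‖t + a‖ ^ 2 + c ^ 2)⁻¹ - (‖t‖ ^ 2 + c ^ 2)⁻¹)) atTop (𝓝 0) := by
  refine squeeze_zero_norm' (a := fun K => 224 * π * ‖a‖ ^ 2 / K) ?_
    (tendsto_const_nhds.div_atTop tendsto_id)
  filter_upwards [eventually_ge_atTop (2 * ‖a‖ + 1)] with K hK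
  exact norm_setIntegral_ball_shift_le hc a hK

/-- for `N = n+2 ≥ 2` and fixed `q₁,…,q_{N-1}`,
`lim_{K→∞} ∫_{|q_N|<K} (G(q₁,…,q_N) - 1/|q_N|²) dq_N = -L(q₁,…,q_{N-1})`. -/
theorem ball_integral_G_tendsto_neg_L (m μ : ℝ) (hm : 0 < m) (hμ : 0 < μ)
    (n : ℕ) (q : Fin (n + 1) → R3) :
    Filter.Tendsto
      (fun K : ℝ => ∫ t in Metric.ball (0 : R3) K,
        (Gker m μ (Fin.snoc q t) - (‖t‖ ^ 2)⁻¹))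
      Filter.atTop (nhds (-Lker m μ q)) := by
  have hpos := Lker_radicand_pos m μ hm hμ q
  simp only [Gker_snoc m μ hm]
  unfold Lker
  set a := (m + 1)⁻¹ • ∑ i, q i
  set R := (m * (m + 2) / (m + 1) ^ 2) * ∑ i, ‖q i‖ ^ 2
    + (2 * m / (m + 1) ^ 2) * ∑ i, ∑ j ∈ Finset.Ioi i, ⟪q i, q j⟫_ℝ + μ
  have hc : 0 < √R := Real.sqrt_pos.2 hpos
  have hcR : √R ^ 2 = R := Real.sq_sqrt hpos.le
  have hint := integrable_inv_norm_sq_add_sq_sub hc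
  have hcont := continuous_inv_norm_sq_add_sq hc
  have hlim := (tendsto_setIntegral_ball_shift hc a).add
    ((aecover_ball (μ := volume) (x := (0 : R3)) tendsto_id).integral_tendsto_of_countably_generated
      hint)
  rw [integral_inv_norm_sq_add_sq_sub hc, zero_add] at hlim
  refine hlim.congr fun K => ?_
  have hshift : Continuous fun t : R3 => (‖t + a‖ ^ 2 + √R ^ 2)⁻¹ - (‖t‖ ^ 2 + √R ^ 2)⁻¹ :=
    (hcont.comp (continuous_add_const a)).sub hcont
  rw [id, ← integral_add (integrableOn_ball_of_continuous hshift _ _) hint.integrableOn]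
  simp only [sub_add_sub_cancel, hcR]
end
end

section
/- For every m>0 and every 0≤β≤1 one has Λ_β(m) ≤ 4√2·(1+m)²·(2+4m+m²)^{3/2} / (π·(m(m+2))³). -/
open MeasureTheory Real Filter Topology
open scoped InnerProductSpace ENNReal

noncomputable section

/-- `Λ_β(m)`, as a supremum in the extended nonnegative reals. -/
def Lamb (m β : ℝ) : ℝ≥0∞ :=
  ⨆ (s : R3) (K : R3) (Q : ℝ) (_ : 0 < Q),
    ENNReal.ofReal ((‖s‖ ^ 2 + Q ^ 2) / (π ^ 2 * (1 + m))) *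
      ∫⁻ t : R3, ENNReal.ofReal ((1 / ‖t‖ ^ 2) *
        (ellm m s K Q ^ ((β - 1) / 2) / ellm m t K Q ^ ((β + 1) / 2)
          + ellm m t K Q ^ ((β - 1) / 2) / ellm m s K Q ^ ((β + 1) / 2)) * Dker m s t K Q)

/-- The integral over `ℝ³` of the radial function `|t|⁻² (c + |t|²)^{-3/2}`. -/
theorem lintegral_inv_sq_mul_inv_sqrt_add_sq_pow_three {c : ℝ} (hc : 0 < c) :
    ∫⁻ t : R3, ENNReal.ofReal ((‖t‖ ^ 2)⁻¹ * (Real.sqrt (c + ‖t‖ ^ 2) ^ 3)⁻¹)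
      = ENNReal.ofReal (4 * π / c) := by
  have hpos : ∀ r : ℝ, 0 < c + r ^ 2 := fun r => by positivity
  have hderiv : ∀ r ∈ Set.Ici (0 : ℝ),
      HasDerivAt (fun r : ℝ => r / (c * Real.sqrt (c + r ^ 2)))
        ((Real.sqrt (c + r ^ 2) ^ 3)⁻¹) r := by
    intro r _
    have hs : 0 < Real.sqrt (c + r ^ 2) := Real.sqrt_pos.2 (hpos r)
    have hsq : Real.sqrt (c + r ^ 2) ^ 2 = c + r ^ 2 := Real.sq_sqrt (hpos r).le
    have h := (hasDerivAt_id r).div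
      (((((hasDerivAt_id r).pow 2).const_add c).sqrt (hpos r).ne').const_mul c)
      (mul_pos hc hs).ne'
    refine h.congr_deriv ?_
    simp only [id, Nat.cast_ofNat, Pi.pow_apply]
    field_simp
    linear_combination hsq
  have hnonneg : ∀ r ∈ Set.Ioi (0 : ℝ), 0 ≤ (Real.sqrt (c + r ^ 2) ^ 3)⁻¹ :=
    fun r _ => by positivity
  have hlim : Tendsto (fun r : ℝ => r / (c * Real.sqrt (c + r ^ 2))) atTop (𝓝 (1 / c)) := by
    have h0 : Tendsto (fun r : ℝ => 1 / (c * Real.sqrt (c / r ^ 2 + 1))) atTop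
        (𝓝 (1 / (c * Real.sqrt (0 + 1)))) := by
      have h1 : Tendsto (fun r : ℝ => c / r ^ 2) atTop (𝓝 0) :=
        tendsto_const_nhds.div_atTop (tendsto_pow_atTop two_ne_zero)
      refine tendsto_const_nhds.div
        (((h1.add tendsto_const_nhds).sqrt).const_mul c) ?_
      simp [hc.ne']
    simp only [zero_add, Real.sqrt_one, mul_one] at h0
    refine h0.congr' ?_
    filter_upwards [eventually_gt_atTop 0] with r hr
    have h2 : c + r ^ 2 = (c / r ^ 2 + 1) * r ^ 2 := by field_simp
    have h3 : 0 < Real.sqrt (c / r ^ 2 + 1) := Real.sqrt_pos.2 (by positivity)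
    rw [h2, Real.sqrt_mul (by positivity), Real.sqrt_sq hr.le]
    field_simp
  have hcongr : Set.EqOn
      (fun y : ℝ => y ^ (Module.finrank ℝ R3 - 1) •
        ((y ^ 2)⁻¹ * (Real.sqrt (c + y ^ 2) ^ 3)⁻¹))
      (fun y => (Real.sqrt (c + y ^ 2) ^ 3)⁻¹) (Set.Ioi 0) := by
    intro y hy
    have hy : 0 < y := hy
    simp only [finrank_euclideanSpace, Fintype.card_fin, smul_eq_mul, Nat.reduceSub]
    rw [← mul_assoc, mul_inv_cancel₀ (by positivity), one_mul]
  have hint : Integrable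
      (fun t : R3 => (‖t‖ ^ 2)⁻¹ * (Real.sqrt (c + ‖t‖ ^ 2) ^ 3)⁻¹) := by
    refine (integrable_fun_norm_addHaar volume
      (f := fun y : ℝ => (y ^ 2)⁻¹ * (Real.sqrt (c + y ^ 2) ^ 3)⁻¹)).2 ?_
    exact (integrableOn_congr_fun hcongr measurableSet_Ioi).2
      (integrableOn_Ioi_deriv_of_nonneg' hderiv hnonneg hlim)
  rw [← ofReal_integral_eq_lintegral_ofReal hint (ae_of_all _ fun t => by positivity)]
  congr 1
  rw [integral_fun_norm_addHaar volume
    (fun y : ℝ => (y ^ 2)⁻¹ * (Real.sqrt (c + y ^ 2) ^ 3)⁻¹),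
    setIntegral_congr_fun measurableSet_Ioi hcongr,
    integral_Ioi_of_hasDerivAt_of_nonneg' hderiv hnonneg hlim]
  have hvol : (volume : Measure R3).real (Metric.ball 0 1) = π * 4 / 3 := by
    rw [Measure.real, EuclideanSpace.volume_ball_fin_three]
    simp only [ENNReal.ofReal_one, one_pow, one_mul]
    exact ENNReal.toReal_ofReal (by positivity)
  rw [hvol]
  simp only [finrank_euclideanSpace, Fintype.card_fin, smul_eq_mul, nsmul_eq_mul]
  push_cast
  field_simp
  ring

/-- The symmetrized weighted products of `a⁻¹` and `b⁻¹` are at most `a⁻¹ + b⁻¹`. -/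
theorem rpow_div_rpow_add_le_inv_add_inv {a b β : ℝ} (ha : 0 < a) (hb : 0 < b)
    (hβ₀ : -1 ≤ β) (hβ₁ : β ≤ 1) :
    a ^ ((β - 1) / 2) / b ^ ((β + 1) / 2) + b ^ ((β - 1) / 2) / a ^ ((β + 1) / 2)
      ≤ a⁻¹ + b⁻¹ := by
  have key : ∀ {x y : ℝ}, 0 < x → 0 < y →
      x ^ ((β - 1) / 2) / y ^ ((β + 1) / 2) ≤ (1 - β) / 2 * x⁻¹ + (β + 1) / 2 * y⁻¹ := by
    intro x y hx hy
    have h := Real.geom_mean_le_arith_mean2_weighted (w₁ := (1 - β) / 2) (w₂ := (β + 1) / 2)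
      (by linarith) (by linarith) (inv_nonneg.2 hx.le) (inv_nonneg.2 hy.le) (by ring)
    rwa [Real.inv_rpow hx.le, Real.inv_rpow hy.le, ← Real.rpow_neg hx.le, ← div_eq_mul_inv,
      show -((1 - β) / 2) = (β - 1) / 2 by ring] at h
  linarith [key ha hb, key hb ha]

/-- `ℓ_m` in terms of the shifted variable `s + K / (2 + m)`. -/
theorem ellm_eq_sqrt_shift {m : ℝ} (hm : 0 < m) (s K : R3) (Q : ℝ) :
    ellm m s K Q = Real.sqrt (m * (m + 2) / (m + 1) ^ 2 * ‖s + (2 + m)⁻¹ • K‖ ^ 2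
      + m / (1 + m) * (Q ^ 2 + (2 + m)⁻¹ * ‖K‖ ^ 2)) := by
  unfold ellm
  congr 1
  rw [norm_add_sq_real, norm_add_sq_real, norm_smul, inner_smul_right, mul_pow,
    Real.norm_eq_abs, sq_abs]
  field_simp
  ring

/-- The form `|s|² + |t|² + Q²` is controlled by the shifted form. -/
theorem norm_sq_add_norm_sq_add_sq_le {m : ℝ} (hm : 0 < m) (s t K : R3) (Q : ℝ) :
    m * (m + 2) / (2 + 4 * m + m ^ 2) * (‖s‖ ^ 2 + Q ^ 2 + ‖t‖ ^ 2)
      ≤ ‖s + (2 + m)⁻¹ • K‖ ^ 2 + ‖t + (2 + m)⁻¹ • K‖ ^ 2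
        + m / (1 + m) * (Q ^ 2 + (2 + m)⁻¹ * ‖K‖ ^ 2) := by
  set γ : ℝ := (2 + m)⁻¹ + m / (2 * (m + 1)) with hγ
  have hs : 0 ≤ ‖s + γ • K‖ ^ 2 := by positivity
  have ht : 0 ≤ ‖t + γ • K‖ ^ 2 := by positivity
  have hN : 0 < 2 + 4 * m + m ^ 2 := by positivity
  have hid : ‖s + (2 + m)⁻¹ • K‖ ^ 2 + ‖t + (2 + m)⁻¹ • K‖ ^ 2
        + m / (1 + m) * (Q ^ 2 + (2 + m)⁻¹ * ‖K‖ ^ 2)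
      - m * (m + 2) / (2 + 4 * m + m ^ 2) * (‖s‖ ^ 2 + Q ^ 2 + ‖t‖ ^ 2)
      = 2 * (m + 1) / (2 + 4 * m + m ^ 2) * (‖s + γ • K‖ ^ 2 + ‖t + γ • K‖ ^ 2)
        + m ^ 2 / ((1 + m) * (2 + 4 * m + m ^ 2)) * Q ^ 2 := by
    rw [norm_add_sq_real, norm_add_sq_real, norm_add_sq_real s, norm_add_sq_real t,
      norm_smul, norm_smul, inner_smul_right, inner_smul_right, inner_smul_right,
      inner_smul_right, mul_pow, mul_pow, Real.norm_eq_abs, Real.norm_eq_abs, sq_abs, sq_abs, hγ]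
    field_simp
    ring
  have : 0 ≤ 2 * (m + 1) / (2 + 4 * m + m ^ 2) * (‖s + γ • K‖ ^ 2 + ‖t + γ • K‖ ^ 2)
        + m ^ 2 / ((1 + m) * (2 + 4 * m + m ^ 2)) * Q ^ 2 := by positivity
  linarith

/-- Cauchy–Schwarz bound on `D`. -/
theorem Dker_le {m : ℝ} (hm : 0 < m) (s t K : R3) {Q : ℝ} (hQ : 0 < Q) :
    Dker m s t K Q ≤ ‖s + (2 + m)⁻¹ • K‖ * ‖t + (2 + m)⁻¹ • K‖ /
      (m * (m + 2) / (m + 1) ^ 2 * (‖s + (2 + m)⁻¹ • K‖ ^ 2 + ‖t + (2 + m)⁻¹ • K‖ ^ 2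
        + m / (1 + m) * (Q ^ 2 + (2 + m)⁻¹ * ‖K‖ ^ 2)) ^ 2) := by
  unfold Dker
  set u := s + (2 + m)⁻¹ • K
  set v := t + (2 + m)⁻¹ • K
  set p := m / (1 + m) * (Q ^ 2 + (2 + m)⁻¹ * ‖K‖ ^ 2)
  have hp : 0 < p := by positivity
  have hcs : |⟪u, v⟫_ℝ| ≤ ‖u‖ * ‖v‖ := abs_real_inner_le_norm u v
  have hc : |2 * ⟪u, v⟫_ℝ| ≤ ‖u‖ ^ 2 + ‖v‖ ^ 2 + p := by
    rw [abs_mul, abs_two]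
    nlinarith [sq_nonneg (‖u‖ - ‖v‖)]
  have hc2 : (2 * ⟪u, v⟫_ℝ) ^ 2 ≤ (‖u‖ ^ 2 + ‖v‖ ^ 2 + p) ^ 2 := by
    rw [← sq_abs]
    gcongr
  refine div_le_div₀ (by positivity) hcs (by positivity) ?_
  have h : (2 / (1 + m) * ⟪u, v⟫_ℝ) ^ 2 ≤ (‖u‖ ^ 2 + ‖v‖ ^ 2 + p) ^ 2 / (m + 1) ^ 2 := by
    rw [show (2 / (1 + m) * ⟪u, v⟫_ℝ) ^ 2 = (2 * ⟪u, v⟫_ℝ) ^ 2 / (m + 1) ^ 2 by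
      field_simp; ring]
    gcongr
  have h2 : m * (m + 2) / (m + 1) ^ 2 * (‖u‖ ^ 2 + ‖v‖ ^ 2 + p) ^ 2
      = (‖u‖ ^ 2 + ‖v‖ ^ 2 + p) ^ 2 - (‖u‖ ^ 2 + ‖v‖ ^ 2 + p) ^ 2 / (m + 1) ^ 2 := by
    field_simp
    ring
  linarith

/-- Pointwise bound of the integrand of `Λ_β(m)`, without the factor `|t|⁻²`. -/
theorem weight_mul_Dker_le {m β : ℝ} (hm : 0 < m) (hβ₀ : -1 ≤ β) (hβ₁ : β ≤ 1)
    (s t K : R3) {Q : ℝ} (hQ : 0 < Q) :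
    (ellm m s K Q ^ ((β - 1) / 2) / ellm m t K Q ^ ((β + 1) / 2)
        + ellm m t K Q ^ ((β - 1) / 2) / ellm m s K Q ^ ((β + 1) / 2)) * Dker m s t K Q
      ≤ Real.sqrt 2 * (m + 1) ^ 3 * Real.sqrt (2 + 4 * m + m ^ 2) ^ 3 / (m * (m + 2)) ^ 3
        * (Real.sqrt (‖s‖ ^ 2 + Q ^ 2 + ‖t‖ ^ 2) ^ 3)⁻¹ := by
  have hD := Dker_le hm s t K hQ
  have hform := norm_sq_add_norm_sq_add_sq_le hm s t K Q
  rw [ellm_eq_sqrt_shift hm s, ellm_eq_sqrt_shift hm t]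
  set x := ‖s + (2 + m)⁻¹ • K‖
  set y := ‖t + (2 + m)⁻¹ • K‖
  set p := m / (1 + m) * (Q ^ 2 + (2 + m)⁻¹ * ‖K‖ ^ 2)
  set M := m * (m + 2) / (m + 1) ^ 2 with hM
  have hp : 0 < p := by positivity
  have hx : 0 ≤ x := norm_nonneg _
  have hy : 0 ≤ y := norm_nonneg _
  have hMpos : 0 < M := by positivity
  set μ := Real.sqrt M with hμ
  have hμpos : 0 < μ := Real.sqrt_pos.2 hMpos
  have hμsq : μ ^ 2 = M := Real.sq_sqrt hMpos.le
  set a := Real.sqrt (M * x ^ 2 + p)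
  set b := Real.sqrt (M * y ^ 2 + p)
  have ha : 0 < a := Real.sqrt_pos.2 (by positivity)
  have hb : 0 < b := Real.sqrt_pos.2 (by positivity)
  have hxa : x * a⁻¹ ≤ μ⁻¹ := by
    have : μ * x ≤ a := Real.le_sqrt_of_sq_le (by rw [mul_pow, hμsq]; linarith)
    rw [← div_eq_mul_inv, div_le_iff₀ ha, ← div_eq_inv_mul, le_div_iff₀ hμpos]
    linarith
  have hyb : y * b⁻¹ ≤ μ⁻¹ := by
    have : μ * y ≤ b := Real.le_sqrt_of_sq_le (by rw [mul_pow, hμsq]; linarith)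
    rw [← div_eq_mul_inv, div_le_iff₀ hb, ← div_eq_inv_mul, le_div_iff₀ hμpos]
    linarith
  have hW := rpow_div_rpow_add_le_inv_add_inv ha hb hβ₀ hβ₁
  set T := Real.sqrt (x ^ 2 + y ^ 2 + p) with hT
  have hTpos : 0 < T := Real.sqrt_pos.2 (by positivity)
  have hTsq : T ^ 2 = x ^ 2 + y ^ 2 + p := Real.sq_sqrt (by positivity)
  have hxy : x + y ≤ Real.sqrt 2 * T := by
    rw [hT, ← Real.sqrt_mul zero_le_two]
    exact Real.le_sqrt_of_sq_le (by nlinarith [sq_nonneg (x - y)])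
  have hnum : (a⁻¹ + b⁻¹) * (x * y) ≤ μ⁻¹ * (Real.sqrt 2 * T) := by
    calc (a⁻¹ + b⁻¹) * (x * y) = (x * a⁻¹) * y + (y * b⁻¹) * x := by ring
      _ ≤ μ⁻¹ * y + μ⁻¹ * x := by gcongr
      _ = μ⁻¹ * (x + y) := by ring
      _ ≤ μ⁻¹ * (Real.sqrt 2 * T) := by gcongr
  set N := 2 + 4 * m + m ^ 2
  have hN : 0 < N := by positivity
  set R := Real.sqrt (‖s‖ ^ 2 + Q ^ 2 + ‖t‖ ^ 2)
  have hR : 0 < R := Real.sqrt_pos.2 (by positivity)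
  have hsN : 0 < Real.sqrt N := Real.sqrt_pos.2 hN
  have hμT : m * (m + 2) / ((m + 1) * Real.sqrt N) * R ≤ μ * T := by
    have hκ : m * (m + 2) / ((m + 1) * Real.sqrt N)
        = μ * Real.sqrt (m * (m + 2) / N) := by
      rw [hμ, hM, ← Real.sqrt_mul (by positivity), eq_comm,
        Real.sqrt_eq_iff_mul_self_eq (by positivity) (by positivity)]
      have := Real.sq_sqrt hN.le
      field_simp
      rw [this]
    rw [hκ, mul_assoc, ← Real.sqrt_mul (by positivity)]
    gcongr
    exact Real.sqrt_le_sqrt hform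
  calc _ ≤ (a⁻¹ + b⁻¹) * (x * y / (M * (x ^ 2 + y ^ 2 + p) ^ 2)) :=
        (mul_le_mul_of_nonneg_left hD (by positivity)).trans
          (mul_le_mul_of_nonneg_right hW (by positivity))
    _ = (a⁻¹ + b⁻¹) * (x * y) / (μ ^ 2 * T ^ 4) := by
        rw [← hTsq, ← hμsq]
        ring
    _ ≤ μ⁻¹ * (Real.sqrt 2 * T) / (μ ^ 2 * T ^ 4) := by gcongr
    _ = Real.sqrt 2 / (μ * T) ^ 3 := by
        field_simp
    _ ≤ Real.sqrt 2 / (m * (m + 2) / ((m + 1) * Real.sqrt N) * R) ^ 3 := by gcongr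
    _ = _ := by
        field_simp

/-- for `m > 0` and `0 ≤ β ≤ 1`,
`Λ_β(m) ≤ 4√2 (1+m)² (2+4m+m²)^{3/2} / (π (m(m+2))³)`. -/
theorem Lamb_upper_bound_small_beta (m β : ℝ) (hm : 0 < m) (hβ₀ : 0 ≤ β) (hβ₁ : β ≤ 1) :
    Lamb m β ≤ ENNReal.ofReal (4 * Real.sqrt 2 * (1 + m) ^ 2
      * (2 + 4 * m + m ^ 2) ^ ((3 : ℝ) / 2) / (π * (m * (m + 2)) ^ 3)) := by
  unfold Lamb
  refine iSup_le fun s => iSup_le fun K => iSup_le fun Q => iSup_le fun hQ => ?_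
  set c := ‖s‖ ^ 2 + Q ^ 2 with hc
  have hcpos : 0 < c := by positivity
  set B := Real.sqrt 2 * (m + 1) ^ 3 * Real.sqrt (2 + 4 * m + m ^ 2) ^ 3 / (m * (m + 2)) ^ 3
  have hB : 0 ≤ B := by positivity
  have hpow : (2 + 4 * m + m ^ 2) ^ ((3 : ℝ) / 2) = Real.sqrt (2 + 4 * m + m ^ 2) ^ 3 := by
    rw [Real.sqrt_eq_rpow, ← Real.rpow_mul_natCast (by positivity)]
    norm_num
  calc _ ≤ ENNReal.ofReal (c / (π ^ 2 * (1 + m))) *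
        ∫⁻ t : R3, ENNReal.ofReal B *
          ENNReal.ofReal ((‖t‖ ^ 2)⁻¹ * (Real.sqrt (c + ‖t‖ ^ 2) ^ 3)⁻¹) := by
        gcongr with t
        rw [← ENNReal.ofReal_mul hB]
        refine ENNReal.ofReal_le_ofReal ?_
        rw [one_div, mul_assoc, mul_left_comm B]
        exact mul_le_mul_of_nonneg_left
          (weight_mul_Dker_le hm (by linarith) hβ₁ s t K hQ) (by positivity)
    _ = ENNReal.ofReal (c / (π ^ 2 * (1 + m)) * (B * (4 * π / c))) := by
        rw [lintegral_const_mul' _ _ ENNReal.ofReal_ne_top,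
          lintegral_inv_sq_mul_inv_sqrt_add_sq_pow_three hcpos, ← ENNReal.ofReal_mul hB,
          ← ENNReal.ofReal_mul (by positivity)]
    _ ≤ _ := by
        refine ENNReal.ofReal_le_ofReal (le_of_eq ?_)
        rw [hpow]
        simp only [B]
        field_simp
        ring
end
end

section
/- For every m>0 and every 1<β<3 one has Λ_β(m) ≤ (4/π)·(m+1)^{(β+7)/4}·(2+4m+m²)^{(7−β)/4} / (m³·(2+m)^{(13−β)/4}) · ( 2/(3−β) + (√π/2)·Γ((5−β)/4)/Γ((7−β)/4) ), where Γ denotes the Gamma function. In particular, Λ_β(m) is finite for all 0≤β<3 and, for each fixed 0≤β<3, Λ_β(m) → 0 as m → ∞. -/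
open MeasureTheory Real Filter Topology
open scoped InnerProductSpace ENNReal

noncomputable section

/-- The integrand of the Gamma integral has the expected lower Lebesgue integral. -/
lemma lintegral_rpow_mul_exp_neg_mul {a r : ℝ} (ha : 0 < a) (hr : 0 < r) :
    ∫⁻ u in Set.Ioi (0 : ℝ), ENNReal.ofReal (u ^ (a - 1) * Real.exp (-(r * u)))
      = ENNReal.ofReal ((1 / r) ^ a * Real.Gamma a) := by
  have h := Real.integral_rpow_mul_exp_neg_mul_Ioi ha hr
  have hG := Real.Gamma_pos_of_pos ha
  rw [← h, ofReal_integral_eq_lintegral_ofReal]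
  · refine Integrable.of_integral_ne_zero ?_
    rw [h]; positivity
  · filter_upwards [ae_restrict_mem measurableSet_Ioi] with u hu
    have : (0 : ℝ) < u := hu
    simp only [Pi.zero_apply]; positivity

lemma lintegral_gaussian_Ioi {b : ℝ} (hb : 0 < b) :
    ∫⁻ r in Set.Ioi (0 : ℝ), ENNReal.ofReal (Real.exp (-b * r ^ 2))
      = ENNReal.ofReal (Real.sqrt (π / b) / 2) := by
  rw [← integral_gaussian_Ioi b, ofReal_integral_eq_lintegral_ofReal]
  · exact (integrable_exp_neg_mul_sq hb).integrableOn
  · exact Filter.Eventually.of_forall fun r => (Real.exp_pos _).le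

lemma lintegral_add_sq_rpow {a S : ℝ} (ha : 1 / 2 < a) (hS : 0 < S) :
    ∫⁻ r in Set.Ioi (0 : ℝ), ENNReal.ofReal ((S ^ 2 + r ^ 2) ^ (-a))
      = ENNReal.ofReal (Real.sqrt π / 2 * Real.Gamma (a - 1 / 2) / Real.Gamma a
          * S ^ (1 - 2 * a)) := by
  have ha0 : 0 < a := by linarith
  have hG := Real.Gamma_pos_of_pos ha0
  have hG' := Real.Gamma_pos_of_pos (show 0 < a - 1 / 2 by linarith)
  have h1 : ∫⁻ r in Set.Ioi (0 : ℝ), ENNReal.ofReal ((S ^ 2 + r ^ 2) ^ (-a))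
      = ENNReal.ofReal (Real.Gamma a)⁻¹ * ∫⁻ r in Set.Ioi (0 : ℝ), ∫⁻ u in Set.Ioi (0 : ℝ),
          ENNReal.ofReal (u ^ (a - 1) * Real.exp (-((S ^ 2 + r ^ 2) * u))) := by
    rw [← lintegral_const_mul' _ _ ENNReal.ofReal_ne_top]
    refine lintegral_congr fun r => ?_
    have hr : 0 < S ^ 2 + r ^ 2 := by positivity
    rw [lintegral_rpow_mul_exp_neg_mul ha0 hr, ← ENNReal.ofReal_mul (by positivity)]
    congr 1
    rw [one_div, Real.inv_rpow hr.le, ← Real.rpow_neg hr.le]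
    field_simp
  have h2 : ∫⁻ r in Set.Ioi (0 : ℝ), ∫⁻ u in Set.Ioi (0 : ℝ),
          ENNReal.ofReal (u ^ (a - 1) * Real.exp (-((S ^ 2 + r ^ 2) * u)))
      = ∫⁻ u in Set.Ioi (0 : ℝ), ENNReal.ofReal (Real.sqrt π / 2)
          * ENNReal.ofReal (u ^ (a - 1 / 2 - 1) * Real.exp (-(S ^ 2 * u))) := by
    rw [lintegral_lintegral_swap (by fun_prop)]
    refine setLIntegral_congr_fun measurableSet_Ioi fun u hu => ?_
    have hu : (0 : ℝ) < u := hu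
    have e : ∀ r : ℝ, ENNReal.ofReal (u ^ (a - 1) * Real.exp (-((S ^ 2 + r ^ 2) * u)))
        = ENNReal.ofReal (u ^ (a - 1) * Real.exp (-(S ^ 2 * u)))
          * ENNReal.ofReal (Real.exp (-u * r ^ 2)) := fun r => by
      rw [← ENNReal.ofReal_mul (by positivity), mul_assoc, ← Real.exp_add]
      congr 3; ring
    simp only [e]
    rw [lintegral_const_mul' _ _ ENNReal.ofReal_ne_top, lintegral_gaussian_Ioi hu,
      ← ENNReal.ofReal_mul (by positivity), ← ENNReal.ofReal_mul (by positivity)]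
    congr 1
    rw [Real.sqrt_div Real.pi_pos.le, Real.sqrt_eq_rpow u,
      show a - 1 / 2 - 1 = (a - 1) - 1 / 2 by ring, Real.rpow_sub hu (a - 1)]
    ring
  rw [h1, h2, lintegral_const_mul' _ _ ENNReal.ofReal_ne_top,
    lintegral_rpow_mul_exp_neg_mul (by linarith) (by positivity),
    ← ENNReal.ofReal_mul (by positivity), ← ENNReal.ofReal_mul (by positivity)]
  congr 1
  have : (1 / S ^ 2) ^ (a - 1 / 2) = S ^ (1 - 2 * a) := by
    rw [one_div, Real.inv_rpow (by positivity), ← Real.rpow_neg (by positivity),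
      ← Real.rpow_natCast, ← Real.rpow_mul hS.le]
    congr 1; push_cast; ring
  rw [this]
  field_simp

lemma integrableOn_and_integral_add_sq_rpow {a S : ℝ} (ha : 1 / 2 < a) (hS : 0 < S) :
    IntegrableOn (fun r : ℝ => (S ^ 2 + r ^ 2) ^ (-a)) (Set.Ioi 0) ∧
    ∫ r in Set.Ioi (0 : ℝ), (S ^ 2 + r ^ 2) ^ (-a)
      = Real.sqrt π / 2 * Real.Gamma (a - 1 / 2) / Real.Gamma a * S ^ (1 - 2 * a) := by
  have hG := Real.Gamma_pos_of_pos (show 0 < a by linarith)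
  have hG' := Real.Gamma_pos_of_pos (show 0 < a - 1 / 2 by linarith)
  have h := lintegral_add_sq_rpow ha hS
  have hn : 0 ≤ᵐ[volume.restrict (Set.Ioi (0 : ℝ))] fun r : ℝ => (S ^ 2 + r ^ 2) ^ (-a) :=
    Filter.Eventually.of_forall fun r => by simp only [Pi.zero_apply]; positivity
  have hm : AEStronglyMeasurable (fun r : ℝ => (S ^ 2 + r ^ 2) ^ (-a))
      (volume.restrict (Set.Ioi (0 : ℝ))) :=
    (Measurable.pow_const (by fun_prop) _).aestronglyMeasurable
  refine ⟨⟨hm, ?_⟩, ?_⟩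
  · rw [hasFiniteIntegral_iff_ofReal hn, h]
    exact ENNReal.ofReal_lt_top
  · rw [integral_eq_lintegral_of_nonneg_ae hn hm, h, ENNReal.toReal_ofReal (by positivity)]

lemma integrableOn_and_integral_rpow_mul_add_sq_rpow {p S : ℝ} (hp : p < 1) (hS : 0 < S) :
    IntegrableOn (fun r : ℝ => r ^ (-p) * (S ^ 2 + r ^ 2) ^ (-((3 - p) / 2))) (Set.Ioi 0) ∧
    ∫ r in Set.Ioi (0 : ℝ), r ^ (-p) * (S ^ 2 + r ^ 2) ^ (-((3 - p) / 2))
      = 1 / (1 - p) * S⁻¹ ^ 2 := by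
  have hp' : 0 < 1 - p := by linarith
  let g : ℝ → ℝ := fun r => 1 / (1 - p) * S⁻¹ ^ 2 * (r ^ (1 - p) * (S ^ 2 + r ^ 2) ^ (-((1 - p) / 2)))
  have hcont : ContinuousWithinAt g (Set.Ici 0) 0 := by
    refine Continuous.continuousWithinAt ?_
    refine continuous_const.mul (Continuous.mul ?_ ?_)
    · exact Real.continuous_rpow_const hp'.le
    · refine Continuous.rpow_const (by fun_prop) fun x => Or.inl ?_
      positivity
  have hderiv : ∀ x ∈ Set.Ioi (0 : ℝ),
      HasDerivAt g (x ^ (-p) * (S ^ 2 + x ^ 2) ^ (-((3 - p) / 2))) x := by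
    intro x hx
    have hx : 0 < x := hx
    have hW : 0 < S ^ 2 + x ^ 2 := by positivity
    have d1 : HasDerivAt (fun r : ℝ => r ^ (1 - p)) ((1 - p) * x ^ (1 - p - 1)) x :=
      Real.hasDerivAt_rpow_const (Or.inl hx.ne')
    have d2 : HasDerivAt (fun r : ℝ => S ^ 2 + r ^ 2) (2 * x) x := by
      simpa using ((hasDerivAt_id x).pow 2).const_add (S ^ 2)
    have d3 := d2.rpow_const (p := -((1 - p) / 2)) (Or.inl hW.ne')
    have d4 := (d1.mul d3).const_mul (1 / (1 - p) * S⁻¹ ^ 2)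
    refine d4.congr_deriv ?_
    have e1 : (S ^ 2 + x ^ 2) ^ (-((1 - p) / 2))
        = (S ^ 2 + x ^ 2) * (S ^ 2 + x ^ 2) ^ (-((3 - p) / 2)) := by
      rw [mul_comm, ← Real.rpow_add_one hW.ne']; congr 1; ring
    have e2 : x ^ (1 - p) = x * x ^ (-p) := by
      rw [mul_comm, ← Real.rpow_add_one hx.ne']; congr 1; ring
    rw [show 1 - p - 1 = -p by ring, show -((1 - p) / 2) - 1 = -((3 - p) / 2) by ring, e1, e2]
    field_simp
    ring
  have hpos : ∀ x ∈ Set.Ioi (0 : ℝ), 0 ≤ x ^ (-p) * (S ^ 2 + x ^ 2) ^ (-((3 - p) / 2)) := by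
    intro x hx
    have hx : 0 < x := hx
    positivity
  have hlim : Tendsto g atTop (𝓝 (1 / (1 - p) * S⁻¹ ^ 2)) := by
    have hl : Tendsto (fun r : ℝ => (S ^ 2 * (r ^ 2)⁻¹ + 1) ^ (-((1 - p) / 2))) atTop (𝓝 1) := by
      have h0 : Tendsto (fun r : ℝ => S ^ 2 * (r ^ 2)⁻¹ + 1) atTop (𝓝 1) := by
        have := ((tendsto_pow_atTop (α := ℝ) two_ne_zero).inv_tendsto_atTop.const_mul
          (S ^ 2)).add_const 1
        simpa using this
      have := h0.rpow_const (p := -((1 - p) / 2)) (Or.inl one_ne_zero)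
      simpa using this
    have hl' := hl.const_mul (1 / (1 - p) * S⁻¹ ^ 2)
    rw [mul_one] at hl'
    refine hl'.congr' ?_
    filter_upwards [eventually_gt_atTop 0] with r hr
    have e : S ^ 2 + r ^ 2 = r ^ 2 * (S ^ 2 * (r ^ 2)⁻¹ + 1) := by field_simp
    have e' : (r ^ 2 : ℝ) ^ (-((1 - p) / 2)) = (r ^ (1 - p))⁻¹ := by
      rw [← Real.rpow_natCast, ← Real.rpow_mul hr.le, ← Real.rpow_neg hr.le]
      congr 1; push_cast; ring
    simp only [g]
    rw [e, Real.mul_rpow (by positivity) (by positivity), e']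
    have : r ^ (1 - p) ≠ 0 := by positivity
    field_simp
  refine ⟨integrableOn_Ioi_deriv_of_nonneg hcont hderiv hpos hlim, ?_⟩
  rw [integral_Ioi_of_hasDerivAt_of_nonneg hcont hderiv hpos hlim]
  simp [g, Real.zero_rpow hp'.ne']

/-- Integral over `ℝ³` of the radial majorant of the integrand of `Λ_β`. -/
lemma lintegral_radial_majorant {p S C : ℝ} (hp : p < 1) (hS : 0 < S) (hC : 0 ≤ C) :
    ∫⁻ t : R3, ENNReal.ofReal (1 / ‖t‖ ^ 2 *
        (C * ((‖t‖ ^ (-p) + S ^ (-p)) * (S ^ 2 + ‖t‖ ^ 2) ^ (-((3 - p) / 2)))))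
      = ENNReal.ofReal (4 * π * (C * ((1 / (1 - p)
          + Real.sqrt π / 2 * Real.Gamma (1 - p / 2) / Real.Gamma ((3 - p) / 2)) * S⁻¹ ^ 2))) := by
  obtain ⟨i1, v1⟩ := integrableOn_and_integral_rpow_mul_add_sq_rpow hp hS
  obtain ⟨i2, v2⟩ := integrableOn_and_integral_add_sq_rpow
    (show 1 / 2 < (3 - p) / 2 by linarith) hS
  let F : ℝ → ℝ := fun r => 1 / r ^ 2 *
        (C * ((r ^ (-p) + S ^ (-p)) * (S ^ 2 + r ^ 2) ^ (-((3 - p) / 2))))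
  have hF : ∀ r ∈ Set.Ioi (0 : ℝ), r ^ (3 - 1) • F r
      = C * (r ^ (-p) * (S ^ 2 + r ^ 2) ^ (-((3 - p) / 2))
        + S ^ (-p) * (S ^ 2 + r ^ 2) ^ (-((3 - p) / 2))) := by
    intro r hr
    have hr : 0 < r := hr
    simp only [F, smul_eq_mul]
    field_simp
  have hdim : Module.finrank ℝ R3 = 3 := by simp
  have hi : Integrable (fun t : R3 => F ‖t‖) := by
    rw [integrable_fun_norm_addHaar, hdim]
    exact IntegrableOn.congr_fun ((i1.add (i2.const_mul _)).const_mul C)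
      (fun r hr => (hF r hr).symm) measurableSet_Ioi
  have hn : 0 ≤ᵐ[volume] fun t : R3 => F ‖t‖ :=
    Filter.Eventually.of_forall fun t => by simp only [F, Pi.zero_apply]; positivity
  have := ofReal_integral_eq_lintegral_ofReal hi hn
  simp only [F] at this
  rw [← this]
  congr 1
  have h3 := integral_fun_norm_addHaar (volume : Measure R3) F
  simp only [F] at h3
  rw [h3, hdim, setIntegral_congr_fun measurableSet_Ioi hF, integral_const_mul,
    integral_add i1 (i2.const_mul _), integral_const_mul, v1, v2]
  have hv : (volume : Measure R3).real (Metric.ball 0 1) = 4 / 3 * π := by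
    rw [Measure.real, EuclideanSpace.volume_ball_fin_three, ENNReal.toReal_mul]
    simp
    rw [ENNReal.toReal_ofReal (by positivity)]
    ring
  rw [hv]
  have e1 : S ^ (-p) * S ^ (1 - 2 * ((3 - p) / 2)) = S⁻¹ ^ 2 := by
    rw [← Real.rpow_add hS, ← Real.rpow_natCast, Real.inv_rpow hS.le, ← Real.rpow_neg hS.le]
    congr 1; push_cast; ring
  rw [show (3 - p) / 2 - 1 / 2 = 1 - p / 2 by ring]
  simp only [nsmul_eq_mul, smul_eq_mul]
  rw [← e1]
  push_cast
  ring

lemma ellm_sq {m : ℝ} (hm : 0 < m) (s K : R3) (Q : ℝ) :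
    ellm m s K Q ^ 2 = m * (m + 2) / (m + 1) ^ 2 * ‖s + (2 + m)⁻¹ • K‖ ^ 2
      + m / (1 + m) * (Q ^ 2 + (2 + m)⁻¹ * ‖K‖ ^ 2) := by
  rw [ellm, Real.sq_sqrt (by positivity), norm_add_sq_real, norm_add_sq_real, inner_smul_right,
    norm_smul, Real.norm_of_nonneg (by positivity)]
  have h1 : m + 1 ≠ 0 := by positivity
  have h1' : 1 + m ≠ 0 := by positivity
  have h2 : 2 + m ≠ 0 := by positivity
  field_simp
  ring

lemma ellm_pos {m Q : ℝ} (hm : 0 < m) (hQ : 0 < Q) (s K : R3) : 0 < ellm m s K Q :=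
  Real.sqrt_pos.2 (by positivity)

lemma le_ellm_sq {m : ℝ} (hm : 0 < m) (s K : R3) (Q : ℝ) :
    m / (m + 1) * (‖s‖ ^ 2 + Q ^ 2) ≤ ellm m s K Q ^ 2 := by
  rw [ellm, Real.sq_sqrt (by positivity)]
  exact le_add_of_nonneg_left (by positivity)

/-- The bound `|u - v|² ≤ (1 + e)|u|² + (1 + 1/e)|v|²`, applied to `x = (x + v) - v`. -/
lemma norm_sq_le_of_add {e : ℝ} (he : 0 < e) (x v : R3) :
    ‖x‖ ^ 2 ≤ (1 + e) * ‖x + v‖ ^ 2 + (1 + 1 / e) * ‖v‖ ^ 2 := by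
  have h : 0 ≤ ‖e • (x + v) + v‖ ^ 2 := by positivity
  rw [norm_add_sq_real, inner_smul_left, norm_smul, Real.norm_of_nonneg he.le] at h
  simp only [conj_trivial] at h
  have hx : ‖x‖ ^ 2 = ‖x + v‖ ^ 2 - 2 * ⟪x + v, v⟫_ℝ + ‖v‖ ^ 2 := by
    rw [← norm_sub_sq_real, add_sub_cancel_right]
  have h' : 0 ≤ ((e * ‖x + v‖) ^ 2 + 2 * (e * ⟪x + v, v⟫_ℝ) + ‖v‖ ^ 2) / e := by positivity
  have : ((e * ‖x + v‖) ^ 2 + 2 * (e * ⟪x + v, v⟫_ℝ) + ‖v‖ ^ 2) / e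
      = e * ‖x + v‖ ^ 2 + 2 * ⟪x + v, v⟫_ℝ + 1 / e * ‖v‖ ^ 2 := by
    field_simp
  rw [this] at h'
  rw [hx]
  linarith

lemma norm_sq_add_le {m : ℝ} (hm : 0 < m) (s t K : R3) (Q : ℝ) :
    m * (m + 2) / (2 + 4 * m + m ^ 2) * ((‖s‖ ^ 2 + Q ^ 2) + ‖t‖ ^ 2)
      ≤ ‖s + (2 + m)⁻¹ • K‖ ^ 2 + ‖t + (2 + m)⁻¹ • K‖ ^ 2
        + m / (1 + m) * (Q ^ 2 + (2 + m)⁻¹ * ‖K‖ ^ 2) := by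
  have he : 0 < 2 * (m + 1) / (m * (m + 2)) := by positivity
  have hs := norm_sq_le_of_add he s ((2 + m)⁻¹ • K)
  have ht := norm_sq_le_of_add he t ((2 + m)⁻¹ • K)
  have hK : ‖(2 + m)⁻¹ • K‖ ^ 2 = ((2 + m)⁻¹) ^ 2 * ‖K‖ ^ 2 := by
    rw [norm_smul, Real.norm_of_nonneg (by positivity), mul_pow]
  rw [hK] at hs ht
  generalize ‖s + (2 + m)⁻¹ • K‖ ^ 2 = σ at *
  generalize ‖t + (2 + m)⁻¹ • K‖ ^ 2 = τ at *
  have e1 : 1 + 2 * (m + 1) / (m * (m + 2)) = (2 + 4 * m + m ^ 2) / (m * (m + 2)) := by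
    field_simp; ring
  have e2 : (1 + 1 / (2 * (m + 1) / (m * (m + 2)))) * (((2 + m)⁻¹) ^ 2 * ‖K‖ ^ 2)
      = (2 + 4 * m + m ^ 2) / (m * (m + 2)) * (m / (1 + m) * ((2 + m)⁻¹ * ‖K‖ ^ 2)) / 2 := by
    have h1' : 1 + m ≠ 0 := by positivity
    have h2 : 2 + m ≠ 0 := by positivity
    field_simp
    ring
  have e3 : Q ^ 2 ≤ (2 + 4 * m + m ^ 2) / (m * (m + 2)) * (m / (1 + m) * Q ^ 2) := by
    have : (2 + 4 * m + m ^ 2) / (m * (m + 2)) * (m / (1 + m))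
        = 1 + m / ((m + 2) * (1 + m)) := by
      have h1' : 1 + m ≠ 0 := by positivity
      field_simp; ring
    rw [← mul_assoc, this]
    have : 0 ≤ m / ((m + 2) * (1 + m)) * Q ^ 2 := by positivity
    linarith
  rw [e1, e2] at hs ht
  rw [div_mul_eq_mul_div, div_le_iff₀ (by positivity), ← le_div_iff₀' (by positivity)]
  calc ‖s‖ ^ 2 + Q ^ 2 + ‖t‖ ^ 2 ≤ _ := add_le_add (add_le_add hs e3) ht
    _ = _ := by ring

lemma Dker_bounds {m Q : ℝ} (hm : 0 < m) (hQ : 0 < Q) (s t K : R3) :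
    0 ≤ Dker m s t K Q ∧
    Dker m s t K Q ≤ ‖s + (2 + m)⁻¹ • K‖ * ‖t + (2 + m)⁻¹ • K‖ /
      (m * (m + 2) / (m + 1) ^ 2 * (‖s + (2 + m)⁻¹ • K‖ ^ 2 + ‖t + (2 + m)⁻¹ • K‖ ^ 2
        + m / (1 + m) * (Q ^ 2 + (2 + m)⁻¹ * ‖K‖ ^ 2)) ^ 2) := by
  have hu := abs_real_inner_le_norm (s + (2 + m)⁻¹ • K) (t + (2 + m)⁻¹ • K)
  have hσ := norm_nonneg (s + (2 + m)⁻¹ • K)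
  have hτ := norm_nonneg (t + (2 + m)⁻¹ • K)
  have hR : 0 < m / (1 + m) * (Q ^ 2 + (2 + m)⁻¹ * ‖K‖ ^ 2) := by positivity
  rw [Dker]
  generalize ⟪s + (2 + m)⁻¹ • K, t + (2 + m)⁻¹ • K⟫_ℝ = u at *
  generalize ‖s + (2 + m)⁻¹ • K‖ = σ at *
  generalize ‖t + (2 + m)⁻¹ • K‖ = τ at *
  generalize m / (1 + m) * (Q ^ 2 + (2 + m)⁻¹ * ‖K‖ ^ 2) = R at *
  have hX : 0 < σ ^ 2 + τ ^ 2 + R := by positivity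
  have h2u : |2 * u| ≤ σ ^ 2 + τ ^ 2 + R := by
    rw [abs_mul, abs_two]
    nlinarith [sq_nonneg (σ - τ)]
  have h2u' : (2 * u) ^ 2 ≤ (σ ^ 2 + τ ^ 2 + R) ^ 2 :=
    sq_le_sq.2 (by rwa [abs_of_pos hX])
  have hden : m * (m + 2) / (m + 1) ^ 2 * (σ ^ 2 + τ ^ 2 + R) ^ 2
      ≤ (σ ^ 2 + τ ^ 2 + R) ^ 2 - (2 / (1 + m) * u) ^ 2 := by
    have e1 : m * (m + 2) / (m + 1) ^ 2 = 1 - 1 / (1 + m) ^ 2 := by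
      have h1' : 1 + m ≠ 0 := by positivity
      field_simp; ring
    have e2 : (2 / (1 + m) * u) ^ 2 = 1 / (1 + m) ^ 2 * (2 * u) ^ 2 := by
      field_simp
    rw [e1, e2]
    have := mul_le_mul_of_nonneg_left h2u' (show 0 ≤ 1 / (1 + m) ^ 2 by positivity)
    linarith
  have hpos : 0 < m * (m + 2) / (m + 1) ^ 2 * (σ ^ 2 + τ ^ 2 + R) ^ 2 := by positivity
  exact ⟨div_nonneg (abs_nonneg _) (hpos.le.trans hden),
    div_le_div₀ (by positivity) hu hpos hden⟩

lemma rpow_div_rpow_mul_le {p x y X c d k σ τ ρ W : ℝ} (hp0 : 0 ≤ p) (hp : p < 1) (hx : 0 < x)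
    (hy : 0 < y) (hX : 0 < X) (hc : 0 < c) (hd : 0 < d) (hk : 0 < k) (hσ : 0 ≤ σ)
    (hτ : 0 ≤ τ) (hρ : 0 < ρ) (hW : 0 < W) (hxX : x ^ 2 ≤ X) (hσX : σ ^ 2 ≤ X) (hτy : c * τ ^ 2 ≤ y ^ 2)
    (hρy : d * ρ ^ 2 ≤ y ^ 2) (hWX : k * W ≤ X) :
    x ^ p / y ^ (p + 1) * (σ * τ / (c * X ^ 2))
      ≤ c ^ (-(3 / 2) : ℝ) * d ^ (-(p / 2)) * k ^ (-((3 - p) / 2))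
        * (ρ ^ (-p) * W ^ (-((3 - p) / 2))) := by
  have sq_rpow : ∀ {z q : ℝ}, 0 < z → (z ^ 2) ^ q = z ^ (2 * q) := fun {z q} hz => by
    rw [← Real.rpow_natCast, ← Real.rpow_mul hz.le]; norm_cast
  have h1 : x ^ p ≤ X ^ (p / 2) := by
    have := Real.rpow_le_rpow (by positivity) hxX (show 0 ≤ p / 2 by positivity)
    rwa [sq_rpow hx, mul_div_cancel₀ _ two_ne_zero] at this
  have h2 : σ ≤ X ^ (1 / 2 : ℝ) := by
    rw [← Real.sqrt_eq_rpow]; exact Real.le_sqrt_of_sq_le hσX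
  have h3 : τ ≤ c ^ (-(1 / 2) : ℝ) * y := by
    have hc' : c ^ (-(1 / 2) : ℝ) = (Real.sqrt c)⁻¹ := by
      rw [Real.rpow_neg hc.le, Real.sqrt_eq_rpow]
    rw [hc', ← div_eq_inv_mul, le_div_iff₀ (Real.sqrt_pos.2 hc)]
    refine le_of_sq_le_sq ?_ hy.le
    rw [mul_pow, Real.sq_sqrt hc.le, mul_comm]
    exact hτy
  have h4 : y ^ (-p) ≤ d ^ (-(p / 2)) * ρ ^ (-p) := by
    have := Real.rpow_le_rpow_of_nonpos (by positivity) hρy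
      (show -(p / 2) ≤ 0 by linarith)
    rwa [Real.mul_rpow hd.le (by positivity), sq_rpow hy, sq_rpow hρ,
      show 2 * -(p / 2) = -p by ring] at this
  have h5 : X ^ (-((3 - p) / 2)) ≤ k ^ (-((3 - p) / 2)) * W ^ (-((3 - p) / 2)) := by
    rw [← Real.mul_rpow hk.le hW.le]
    exact Real.rpow_le_rpow_of_nonpos (by positivity) hWX (by linarith)
  have eX : X ^ (-((3 - p) / 2)) = X ^ (p / 2) * X ^ (1 / 2 : ℝ) / X ^ 2 := by
    rw [← Real.rpow_add hX, ← Real.rpow_natCast X 2, ← Real.rpow_sub hX]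
    congr 1; push_cast; ring
  have ec : c ^ (-(3 / 2) : ℝ) = c ^ (-(1 / 2) : ℝ) / c := by
    rw [← Real.rpow_sub_one hc.ne']; congr 1; norm_num
  have ey : y ^ (p + 1) = y ^ p * y := Real.rpow_add_one hy.ne' p
  have hyp : y ^ (-p) = (y ^ p)⁻¹ := Real.rpow_neg hy.le p
  calc x ^ p / y ^ (p + 1) * (σ * τ / (c * X ^ 2))
      ≤ X ^ (p / 2) / y ^ (p + 1) * (X ^ (1 / 2 : ℝ) * (c ^ (-(1 / 2) : ℝ) * y) / (c * X ^ 2)) := by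
        gcongr
    _ = c ^ (-(3 / 2) : ℝ) * (y ^ (-p) * X ^ (-((3 - p) / 2))) := by
        rw [eX, ec, ey, hyp]
        have : y ^ p ≠ 0 := by positivity
        field_simp
    _ ≤ c ^ (-(3 / 2) : ℝ) * ((d ^ (-(p / 2)) * ρ ^ (-p))
          * (k ^ (-((3 - p) / 2)) * W ^ (-((3 - p) / 2)))) := by
        gcongr
    _ = _ := by ring

/-- The integrand of `Λ_β` is bounded by a radial function of `t`. -/
lemma integrand_le {m p Q S : ℝ} (hm : 0 < m) (hp0 : 0 ≤ p) (hp : p < 1) (hQ : 0 < Q)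
    (hS : 0 < S) (s t K : R3) (hSs : S ^ 2 = ‖s‖ ^ 2 + Q ^ 2) (ht : t ≠ 0) :
    (ellm m s K Q ^ p / ellm m t K Q ^ (p + 1) + ellm m t K Q ^ p / ellm m s K Q ^ (p + 1))
        * Dker m s t K Q
      ≤ (m * (m + 2) / (m + 1) ^ 2) ^ (-(3 / 2) : ℝ) * (m / (m + 1)) ^ (-(p / 2))
          * (m * (m + 2) / (2 + 4 * m + m ^ 2)) ^ (-((3 - p) / 2))
        * ((‖t‖ ^ (-p) + S ^ (-p)) * (S ^ 2 + ‖t‖ ^ 2) ^ (-((3 - p) / 2))) := by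
  have hls := ellm_pos hm hQ s K
  have hlt := ellm_pos hm hQ t K
  have es := ellm_sq hm s K Q
  have et := ellm_sq hm t K Q
  have ls := le_ellm_sq hm s K Q
  have lt := le_ellm_sq hm t K Q
  have hW := norm_sq_add_le hm s t K Q
  obtain ⟨-, hD⟩ := Dker_bounds hm hQ s t K
  rw [← hSs] at ls hW
  have hR : 0 < m / (1 + m) * (Q ^ 2 + (2 + m)⁻¹ * ‖K‖ ^ 2) := by positivity
  have hσ := norm_nonneg (s + (2 + m)⁻¹ • K)
  have hτ := norm_nonneg (t + (2 + m)⁻¹ • K)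
  have htn : 0 < ‖t‖ := norm_pos_iff.2 ht
  have hd : 0 < m / (m + 1) := by positivity
  have lt' : m / (m + 1) * ‖t‖ ^ 2 ≤ ellm m t K Q ^ 2 := by
    refine le_trans ?_ lt
    gcongr
    linarith [sq_nonneg Q]
  have hc : 0 < m * (m + 2) / (m + 1) ^ 2 := by positivity
  have hc1 : m * (m + 2) / (m + 1) ^ 2 ≤ 1 := by
    rw [div_le_one (by positivity)]; linarith [sq_nonneg m]
  have hk : 0 < m * (m + 2) / (2 + 4 * m + m ^ 2) := by positivity
  generalize Dker m s t K Q = D at *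
  generalize ellm m s K Q = x at *
  generalize ellm m t K Q = y at *
  generalize ‖s + (2 + m)⁻¹ • K‖ = σ at *
  generalize ‖t + (2 + m)⁻¹ • K‖ = τ at *
  generalize m / (1 + m) * (Q ^ 2 + (2 + m)⁻¹ * ‖K‖ ^ 2) = R at *
  generalize m * (m + 2) / (m + 1) ^ 2 = c at *
  generalize m / (m + 1) = d at *
  generalize m * (m + 2) / (2 + 4 * m + m ^ 2) = k at *
  have hX : 0 < σ ^ 2 + τ ^ 2 + R := by positivity
  have hcσ : c * σ ^ 2 ≤ σ ^ 2 := mul_le_of_le_one_left (sq_nonneg _) hc1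
  have hcτ : c * τ ^ 2 ≤ τ ^ 2 := mul_le_of_le_one_left (sq_nonneg _) hc1
  have hσ2 := sq_nonneg σ
  have hτ2 := sq_nonneg τ
  have b1 := rpow_div_rpow_mul_le (W := S ^ 2 + ‖t‖ ^ 2) hp0 hp hls hlt hX hc hd hk hσ hτ htn
    (by positivity) (by linarith) (by linarith) (τ := τ) (by linarith) lt' hW
  have b2 := rpow_div_rpow_mul_le (W := S ^ 2 + ‖t‖ ^ 2) hp0 hp hlt hls hX hc hd hk hτ hσ hS
    (by positivity) (by linarith) (by linarith) (τ := σ) (by linarith) ls hW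
  refine (mul_le_mul_of_nonneg_left hD (by positivity)).trans ?_
  rw [add_mul, mul_comm σ τ]
  rw [mul_comm σ τ] at b1
  refine (add_le_add b1 b2).trans_eq ?_
  ring

lemma Lamb_const_eq {m β : ℝ} (hm : 0 < m) :
    (m * (m + 2) / (m + 1) ^ 2) ^ (-(3 / 2) : ℝ) * (m / (m + 1)) ^ (-((β - 1) / 2 / 2))
          * (m * (m + 2) / (2 + 4 * m + m ^ 2)) ^ (-((3 - (β - 1) / 2) / 2))
      = (1 + m) * ((m + 1) ^ ((β + 7) / 4)
        * (2 + 4 * m + m ^ 2) ^ ((7 - β) / 4) / (m ^ 3 * (2 + m) ^ ((13 - β) / 4))) := by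
  have h1 : 0 < m + 1 := by positivity
  have h2 : 0 < m + 2 := by positivity
  have h3 : 0 < 2 + 4 * m + m ^ 2 := by positivity
  have e2 : (m + 1) ^ 2 = (m + 1) ^ (2 : ℝ) := by norm_cast
  have e3 : m ^ 3 = m ^ (3 : ℝ) := by norm_cast
  rw [add_comm 1 m, add_comm 2 m, e2, e3, Real.div_rpow (by positivity) (by positivity),
    Real.div_rpow (by positivity) (by positivity), Real.div_rpow (by positivity) (by positivity),
    Real.mul_rpow hm.le h2.le, Real.mul_rpow hm.le h2.le, ← Real.rpow_mul h1.le]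
  refine Real.log_injOn_pos (Set.mem_Ioi.2 (by positivity)) (Set.mem_Ioi.2 (by positivity)) ?_
  have q1 : ∀ z : ℝ, (m + 1) ^ z ≠ 0 := fun z => (Real.rpow_pos_of_pos h1 z).ne'
  have q2 : ∀ z : ℝ, (m + 2) ^ z ≠ 0 := fun z => (Real.rpow_pos_of_pos h2 z).ne'
  have q3 : ∀ z : ℝ, (2 + 4 * m + m ^ 2) ^ z ≠ 0 := fun z => (Real.rpow_pos_of_pos h3 z).ne'
  have q4 : ∀ z : ℝ, m ^ z ≠ 0 := fun z => (Real.rpow_pos_of_pos hm z).ne'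
  have r1 := h1.ne'
  simp only [Real.log_mul, Real.log_div, Real.log_rpow hm, Real.log_rpow h1, Real.log_rpow h2,
    Real.log_rpow h3, q1, q2, q3, q4, r1, ne_eq, not_false_eq_true, mul_eq_zero, div_eq_zero_iff,
    or_self]
  ring

lemma Lamb_le {m β : ℝ} (hm : 0 < m) (h1 : 1 < β) (h3 : β < 3) :
    Lamb m β ≤ ENNReal.ofReal ((4 / π) * (m + 1) ^ ((β + 7) / 4)
        * (2 + 4 * m + m ^ 2) ^ ((7 - β) / 4) / (m ^ 3 * (2 + m) ^ ((13 - β) / 4))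
        * (2 / (3 - β) + (Real.sqrt π / 2) * Real.Gamma ((5 - β) / 4)
            / Real.Gamma ((7 - β) / 4))) := by
  refine iSup_le fun s => iSup_le fun K => iSup_le fun Q => iSup_le fun hQ => ?_
  have hS : 0 < Real.sqrt (‖s‖ ^ 2 + Q ^ 2) := Real.sqrt_pos.2 (by positivity)
  have hSs : Real.sqrt (‖s‖ ^ 2 + Q ^ 2) ^ 2 = ‖s‖ ^ 2 + Q ^ 2 := Real.sq_sqrt (by positivity)
  generalize Real.sqrt (‖s‖ ^ 2 + Q ^ 2) = S at hS hSs
  have hmajor := lintegral_radial_majorant (p := (β - 1) / 2) (by linarith) hS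
    (show 0 ≤ (m * (m + 2) / (m + 1) ^ 2) ^ (-(3 / 2) : ℝ) * (m / (m + 1)) ^ (-((β - 1) / 2 / 2))
          * (m * (m + 2) / (2 + 4 * m + m ^ 2)) ^ (-((3 - (β - 1) / 2) / 2)) by positivity)
  refine (mul_le_mul_right
    ((lintegral_mono fun t => ENNReal.ofReal_le_ofReal ?_).trans_eq hmajor) _).trans ?_
  · rcases eq_or_ne t 0 with rfl | ht
    · simp
    · have := integrand_le (p := (β - 1) / 2) hm (by linarith) (by linarith) hQ hS s t K hSs ht
      rw [show (β - 1) / 2 + 1 = (β + 1) / 2 by ring] at this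
      rw [mul_assoc]
      exact mul_le_mul_of_nonneg_left this (by positivity)
  rw [← ENNReal.ofReal_mul (by positivity)]
  refine ENNReal.ofReal_le_ofReal (le_of_eq ?_)
  rw [Lamb_const_eq hm, ← hSs, show 1 / (1 - (β - 1) / 2) = 2 / (3 - β) by
    rw [div_eq_div_iff (by linarith) (by linarith)]; ring,
    show 1 - (β - 1) / 2 / 2 = (5 - β) / 4 by ring,
    show (3 - (β - 1) / 2) / 2 = (7 - β) / 4 by ring]
  have hm1 : 1 + m ≠ 0 := by positivity
  generalize 2 / (3 - β) + (Real.sqrt π / 2) * Real.Gamma ((5 - β) / 4)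
            / Real.Gamma ((7 - β) / 4) = Γ'
  have h1 : (2 + m) ^ ((13 - β) / 4) ≠ 0 := by positivity
  field_simp

/-- The symmetrised weight is nondecreasing in the exponent. -/
lemma weight_mono {x y b b' : ℝ} (hx : 0 < x) (hy : 0 < y) (hb : 0 ≤ b) (h : b ≤ b') :
    x ^ ((b - 1) / 2) / y ^ ((b + 1) / 2) + y ^ ((b - 1) / 2) / x ^ ((b + 1) / 2)
      ≤ x ^ ((b' - 1) / 2) / y ^ ((b' + 1) / 2) + y ^ ((b' - 1) / 2) / x ^ ((b' + 1) / 2) := by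
  have key : ∀ c : ℝ, x ^ ((c - 1) / 2) / y ^ ((c + 1) / 2) + y ^ ((c - 1) / 2) / x ^ ((c + 1) / 2)
      = 2 * (x * y) ^ (-(1 / 2) : ℝ) * Real.cosh (c * ((Real.log x - Real.log y) / 2)) := by
    intro c
    rw [Real.cosh_eq, Real.mul_rpow hx.le hy.le]
    simp only [Real.rpow_def_of_pos hx, Real.rpow_def_of_pos hy, ← Real.exp_sub]
    rw [show ∀ A B C D : ℝ, 2 * (A * B) * ((C + D) / 2) = A * B * C + A * B * D by
      intros; ring]
    simp only [← Real.exp_add]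
    congr 2 <;> ring
  rw [key, key]
  refine mul_le_mul_of_nonneg_left ?_ (by positivity)
  rw [Real.cosh_le_cosh, abs_mul, abs_mul, abs_of_nonneg hb, abs_of_nonneg (hb.trans h)]
  gcongr

lemma Lamb_mono {m b b' : ℝ} (hm : 0 < m) (hb : 0 ≤ b) (h : b ≤ b') : Lamb m b ≤ Lamb m b' := by
  refine iSup_mono fun s => iSup_mono fun K => iSup_mono fun Q => iSup_mono fun hQ => ?_
  refine mul_le_mul_right (lintegral_mono fun t => ENNReal.ofReal_le_ofReal ?_) _
  refine mul_le_mul_of_nonneg_right ?_ (Dker_bounds hm hQ s t K).1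
  exact mul_le_mul_of_nonneg_left
    (weight_mono (ellm_pos hm hQ s K) (ellm_pos hm hQ t K) hb h) (by positivity)

lemma Lamb_const_le {m β : ℝ} (hm : 2 ≤ m) (h1 : 1 < β) (h3 : β < 3) :
    (m + 1) ^ ((β + 7) / 4) * (2 + 4 * m + m ^ 2) ^ ((7 - β) / 4)
        / (m ^ 3 * (2 + m) ^ ((13 - β) / 4))
      ≤ 2 ^ ((β + 7) / 4) * 4 ^ ((7 - β) / 4) * m⁻¹ := by
  have hm0 : 0 < m := by linarith
  calc _ ≤ (2 * m) ^ ((β + 7) / 4) * (4 * m ^ 2) ^ ((7 - β) / 4)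
        / (m ^ 3 * m ^ ((13 - β) / 4)) := by
        gcongr
        · linarith
        · linarith
        · nlinarith
        · linarith
        · linarith
    _ = _ := by
        rw [Real.mul_rpow (by positivity) hm0.le, Real.mul_rpow (by positivity) (by positivity),
          ← Real.rpow_natCast m 2, ← Real.rpow_natCast m 3, ← Real.rpow_mul hm0.le,
          ← Real.rpow_neg_one m]
        rw [show ∀ A B C D E F : ℝ, A * B * (C * D) / (E * F) = A * C * (B * D / (E * F)) by
          intros; ring, ← Real.rpow_add hm0, ← Real.rpow_add hm0, ← Real.rpow_sub hm0]
        congr 2; push_cast; ring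

lemma tendsto_Lamb_bound {β : ℝ} (h1 : 1 < β) (h3 : β < 3) :
    Tendsto (fun m : ℝ => ENNReal.ofReal ((4 / π) * (m + 1) ^ ((β + 7) / 4)
        * (2 + 4 * m + m ^ 2) ^ ((7 - β) / 4) / (m ^ 3 * (2 + m) ^ ((13 - β) / 4))
        * (2 / (3 - β) + (Real.sqrt π / 2) * Real.Gamma ((5 - β) / 4)
            / Real.Gamma ((7 - β) / 4)))) atTop (𝓝 0) := by
  have hG : 0 ≤ 2 / (3 - β) + (Real.sqrt π / 2) * Real.Gamma ((5 - β) / 4)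
      / Real.Gamma ((7 - β) / 4) := by
    have a1 := Real.Gamma_pos_of_pos (show 0 < (5 - β) / 4 by linarith)
    have a2 := Real.Gamma_pos_of_pos (show 0 < (7 - β) / 4 by linarith)
    have a3 : 0 < 3 - β := by linarith
    positivity
  generalize 2 / (3 - β) + (Real.sqrt π / 2) * Real.Gamma ((5 - β) / 4)
      / Real.Gamma ((7 - β) / 4) = Γ' at *
  have hlim : Tendsto (fun m : ℝ => ENNReal.ofReal
      (4 / π * (2 ^ ((β + 7) / 4) * 4 ^ ((7 - β) / 4) * m⁻¹) * Γ')) atTop (𝓝 0) := by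
    have := ((tendsto_inv_atTop_zero (𝕜 := ℝ)).const_mul
      ((2 : ℝ) ^ ((β + 7) / 4) * 4 ^ ((7 - β) / 4))).const_mul (4 / π) |>.mul_const Γ'
    simpa using ENNReal.tendsto_ofReal this
  refine tendsto_of_tendsto_of_tendsto_of_le_of_le' tendsto_const_nhds hlim
    (Filter.Eventually.of_forall fun _ => zero_le) ?_
  filter_upwards [eventually_ge_atTop 2] with m hm
  refine ENNReal.ofReal_le_ofReal (mul_le_mul_of_nonneg_right ?_ hG)
  rw [mul_assoc (4 / π), mul_div_assoc (4 / π)]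
  exact mul_le_mul_of_nonneg_left (Lamb_const_le hm h1 h3) (by positivity)

/-- for `m > 0` and `1 < β < 3`, the explicit Gamma-function upper bound
on `Λ_β(m)`; in particular `Λ_β(m)` is finite for `0 ≤ β < 3` and tends to `0` as
`m → ∞` for every fixed `0 ≤ β < 3`. -/
theorem Lamb_upper_bound_large_beta :
    (∀ m β : ℝ, 0 < m → 1 < β → β < 3 →
      Lamb m β ≤ ENNReal.ofReal ((4 / π) * (m + 1) ^ ((β + 7) / 4)
        * (2 + 4 * m + m ^ 2) ^ ((7 - β) / 4) / (m ^ 3 * (2 + m) ^ ((13 - β) / 4))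
        * (2 / (3 - β) + (Real.sqrt π / 2) * Real.Gamma ((5 - β) / 4)
            / Real.Gamma ((7 - β) / 4)))) ∧
    (∀ m β : ℝ, 0 < m → 0 ≤ β → β < 3 → Lamb m β ≠ ⊤) ∧
    (∀ β : ℝ, 0 ≤ β → β < 3 →
      Filter.Tendsto (fun m : ℝ => Lamb m β) Filter.atTop (nhds 0)) := by
  have hdom : ∀ β : ℝ, β < 3 → 1 < max β 2 ∧ max β 2 < 3 := fun β hβ =>
    ⟨lt_of_lt_of_le one_lt_two (le_max_right _ _), max_lt hβ (by norm_num)⟩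
  refine ⟨fun m β hm h1 h3 => Lamb_le hm h1 h3, fun m β hm h0 h3 => ?_, fun β h0 h3 => ?_⟩
  · obtain ⟨h1', h3'⟩ := hdom β h3
    exact ne_top_of_le_ne_top ENNReal.ofReal_ne_top
      ((Lamb_mono hm h0 (le_max_left _ _)).trans (Lamb_le hm h1' h3'))
  · obtain ⟨h1', h3'⟩ := hdom β h3
    refine tendsto_of_tendsto_of_tendsto_of_le_of_le' tendsto_const_nhds
      (tendsto_Lamb_bound h1' h3') (Filter.Eventually.of_forall fun _ => zero_le) ?_
    filter_upwards [eventually_gt_atTop 0] with m hm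
    exact (Lamb_mono hm h0 (le_max_left _ _)).trans (Lamb_le hm h1' h3')
end
end

section
/- For every m>0, the supremum defining Λ(m) is unchanged if it is restricted to configurations where K is an antiparallel multiple of s: Λ(m) = sup over s∈ℝ³, 0≤b≤2+m, Q>0 of ((|s|²+Q²)/(π²(1+m))) ℓ_m(s,−bs,Q)^{−1/2} ∫_{ℝ³} |t|^{−2} ℓ_m(t,−bs,Q)^{−1/2} D(s,t,−bs,Q) dt. -/
open MeasureTheory Real Filter Topology
open scoped InnerProductSpace ENNReal

noncomputable section

/-- Rearrangement: pairing `f` with `g` is largest when `g` is not moved by a reflection `R`, provided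
`f` and `g` order `v` and `R v` in the same way. -/
lemma lintegral_mul_comp_le_of_comonotone (R : R3 ≃ₗᵢ[ℝ] R3) (hR : ∀ v, R (R v) = v)
    {f g : R3 → ℝ≥0∞} (hf : Measurable f) (hg : Measurable g)
    (h : ∀ᵐ v : R3, (f v ≤ f (R v) ∧ g v ≤ g (R v)) ∨ (f (R v) ≤ f v ∧ g (R v) ≤ g v)) :
    ∫⁻ v, f v * g (R v) ≤ ∫⁻ v, f v * g v := by
  have hRm : Measurable R := R.continuous.measurable
  have swap (F : R3 → ℝ≥0∞) (hF : Measurable F) : ∫⁻ v, F (R v) = ∫⁻ v, F v :=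
    R.measurePreserving.lintegral_comp hF
  have hfgR : Measurable fun v => f v * g (R v) := hf.mul (hg.comp hRm)
  have hfg : Measurable fun v => f v * g v := hf.mul hg
  have e₁ : ∫⁻ v, f (R v) * g v = ∫⁻ v, f v * g (R v) := by
    have := swap _ hfgR
    simpa only [hR] using this
  have e₂ : ∫⁻ v, f (R v) * g (R v) = ∫⁻ v, f v * g v := swap _ hfg
  have pair {a b c d : ℝ≥0∞} (hab : a ≤ b) (hcd : c ≤ d) : a * d + b * c ≤ a * c + b * d := by
    obtain ⟨p, rfl⟩ := le_iff_exists_add.1 hab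
    obtain ⟨q, rfl⟩ := le_iff_exists_add.1 hcd
    exact le_iff_exists_add.2 ⟨p * q, by ring⟩
  have key : ∫⁻ v, (f v * g (R v) + f (R v) * g v) ≤ ∫⁻ v, (f v * g v + f (R v) * g (R v)) := by
    refine lintegral_mono_ae (h.mono fun v hv => ?_)
    rcases hv with ⟨h₁, h₂⟩ | ⟨h₁, h₂⟩
    · exact pair h₁ h₂
    · rw [add_comm, add_comm (f v * g v)]
      exact pair h₁ h₂
  rw [lintegral_add_left hfgR, lintegral_add_left hfg, e₁, e₂, ← two_mul,
    ← two_mul] at key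
  exact (ENNReal.mul_le_mul_iff_right two_ne_zero ENNReal.ofNat_ne_top).1 key

/-- For even `f` it suffices to compare the even part of `g`. -/
lemma lintegral_mul_comp_le_of_even (R : R3 ≃ₗᵢ[ℝ] R3) (hR : ∀ v, R (R v) = v)
    {f g : R3 → ℝ≥0∞} (hf : Measurable f) (hg : Measurable g) (hfe : ∀ v, f (-v) = f v)
    (h : ∀ᵐ v : R3, (f v ≤ f (R v) ∧ g v + g (-v) ≤ g (R v) + g (-R v)) ∨
      (f (R v) ≤ f v ∧ g (R v) + g (-R v) ≤ g v + g (-v))) :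
    ∫⁻ v, f v * g (R v) ≤ ∫⁻ v, f v * g v := by
  have hRm : Measurable R := R.continuous.measurable
  have double {k : R3 → ℝ≥0∞} (hk : Measurable k) :
      ∫⁻ v, f v * (k v + k (-v)) = 2 * ∫⁻ v, f v * k v := by
    have hfk : Measurable fun v => f v * k v := hf.mul hk
    simp_rw [mul_add]
    rw [lintegral_add_left hfk, two_mul]
    congr 1
    rw [← lintegral_neg_eq_self (fun v => f v * k v)]
    simp_rw [hfe]
  have key := lintegral_mul_comp_le_of_comonotone R hR hf (hg.add (hg.comp measurable_neg)) h
  have e₁ := double hg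
  have e₂ := double (hg.comp hRm)
  simp only [Function.comp_apply, map_neg] at e₂
  simp only [Pi.add_apply, Function.comp_apply] at key
  rw [e₁, e₂] at key
  exact (ENNReal.mul_le_mul_iff_right two_ne_zero ENNReal.ofNat_ne_top).1 key

/-- In the shifted variable `v = t + K / (2 + m)` the function `ℓ_m` is radial. -/
lemma ellm_sub_smul {m : ℝ} (hm : 0 < m) (v K : R3) (Q : ℝ) :
    ellm m (v - (2 + m)⁻¹ • K) K Q =
      √(m * (m + 2) / (m + 1) ^ 2 * ‖v‖ ^ 2
        + m / (m + 1) * ((2 + m)⁻¹ * ‖K‖ ^ 2 + Q ^ 2)) := by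
  have h : v - (2 + m)⁻¹ • K + K = v + ((1 + m) * (2 + m)⁻¹) • K := by
    have : (1 + m) * (2 + m)⁻¹ = 1 - (2 + m)⁻¹ := by field_simp; ring
    rw [this, sub_smul, one_smul]; abel
  rw [ellm, h, norm_add_sq_real, norm_sub_sq_real, norm_smul, norm_smul, inner_smul_right,
    inner_smul_right, mul_pow, mul_pow, Real.norm_eq_abs, Real.norm_eq_abs, sq_abs, sq_abs]
  congr 1
  field_simp
  ring

/-- The radial factor and the factor `D` of the integrand, in the shifted variables. -/
def shiftedKernel (m : ℝ) (u : R3) (k Q : ℝ) (v : R3) : ℝ :=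
  |⟪u, v⟫_ℝ| / ((‖u‖ ^ 2 + ‖v‖ ^ 2 + m / (1 + m) * (Q ^ 2 + (2 + m)⁻¹ * k ^ 2)) ^ 2
      - ((2 / (1 + m)) * ⟪u, v⟫_ℝ) ^ 2) /
    √√(m * (m + 2) / (m + 1) ^ 2 * ‖v‖ ^ 2 + m / (m + 1) * ((2 + m)⁻¹ * k ^ 2 + Q ^ 2))

lemma shiftedKernel_denom_pos {m : ℝ} (hm : 0 < m) (u v : R3) (k : ℝ) {Q : ℝ} (hQ : 0 < Q) :
    0 < (‖u‖ ^ 2 + ‖v‖ ^ 2 + m / (1 + m) * (Q ^ 2 + (2 + m)⁻¹ * k ^ 2)) ^ 2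
      - ((2 / (1 + m)) * ⟪u, v⟫_ℝ) ^ 2 := by
  have hc : 0 < m / (1 + m) * (Q ^ 2 + (2 + m)⁻¹ * k ^ 2) := by positivity
  have h₁ : |2 / (1 + m) * ⟪u, v⟫_ℝ| ≤ ‖u‖ ^ 2 + ‖v‖ ^ 2 := by
    rw [abs_mul, abs_of_pos (by positivity : 0 < 2 / (1 + m))]
    have h₂ : 2 / (1 + m) ≤ 2 := div_le_self (by norm_num) (by linarith)
    calc 2 / (1 + m) * |⟪u, v⟫_ℝ| ≤ 2 * (‖u‖ * ‖v‖) := by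
          gcongr
          exact abs_real_inner_le_norm u v
      _ ≤ ‖u‖ ^ 2 + ‖v‖ ^ 2 := by nlinarith [sq_nonneg (‖u‖ - ‖v‖)]
  rw [sub_pos]
  apply sq_lt_sq.2
  exact (h₁.trans_lt (by linarith)).trans_le (le_abs_self _)

lemma shiftedKernel_nonneg {m : ℝ} (hm : 0 < m) (u v : R3) (k : ℝ) {Q : ℝ} (hQ : 0 < Q) :
    0 ≤ shiftedKernel m u k Q v := by
  have := shiftedKernel_denom_pos hm u v k hQ
  unfold shiftedKernel
  positivity

lemma shiftedKernel_neg (m : ℝ) (u v : R3) (k Q : ℝ) :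
    shiftedKernel m u k Q (-v) = shiftedKernel m u k Q v := by
  simp [shiftedKernel]

lemma measurable_shiftedKernel (m : ℝ) (u : R3) (k Q : ℝ) :
    Measurable (shiftedKernel m u k Q) := by
  unfold shiftedKernel
  fun_prop

lemma shiftedKernel_le {m : ℝ} (hm : 0 < m) {u v w : R3} (k : ℝ) {Q : ℝ} (hQ : 0 < Q)
    (hvw : ‖v‖ = ‖w‖) (h : |⟪u, v⟫_ℝ| ≤ |⟪u, w⟫_ℝ|) :
    shiftedKernel m u k Q v ≤ shiftedKernel m u k Q w := by
  have hw := shiftedKernel_denom_pos hm u w k hQ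
  unfold shiftedKernel
  rw [hvw]
  gcongr ?_ / _
  refine div_le_div₀ (abs_nonneg _) h hw ?_
  gcongr ?_ - ?_
  rw [mul_pow, mul_pow]
  gcongr ?_ * ?_
  exact sq_le_sq.2 h

/-- The symmetrised inverse square distance to `a` increases with `|⟪a, v⟫|` on spheres. -/
lemma inv_sq_dist_add_le {a v w : R3} (hvw : ‖v‖ = ‖w‖) (h : |⟪a, v⟫_ℝ| ≤ |⟪a, w⟫_ℝ|)
    (hv : v ≠ a) (hv' : -v ≠ a) (hw : w ≠ a) (hw' : -w ≠ a) :
    (‖v - a‖ ^ 2)⁻¹ + (‖-v - a‖ ^ 2)⁻¹ ≤ (‖w - a‖ ^ 2)⁻¹ + (‖-w - a‖ ^ 2)⁻¹ := by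
  have pos {x : R3} (hx : x ≠ a) : 0 < ‖x - a‖ ^ 2 := by
    have := norm_pos_iff.2 (sub_ne_zero.2 hx)
    positivity
  have p₁ := pos hv
  have p₂ := pos hv'
  have p₃ := pos hw
  have p₄ := pos hw'
  rw [inv_add_inv p₁.ne' p₂.ne', inv_add_inv p₃.ne' p₄.ne']
  have hsq := sq_le_sq.2 h
  rw [real_inner_comm, real_inner_comm w] at hsq
  have q₁ := mul_pos p₃ p₄
  simp only [norm_sub_sq_real, norm_neg, inner_neg_left] at p₁ p₂ p₃ p₄ q₁ ⊢
  rw [hvw] at p₁ p₂ ⊢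
  refine div_le_div₀ (by linarith) (le_of_eq (by ring)) q₁ ?_
  nlinarith

lemma lintegral_eq_shiftedKernel {m : ℝ} (hm : 0 < m) (u K : R3) {Q : ℝ} (hQ : 0 < Q) :
    ∫⁻ t : R3, ENNReal.ofReal (Dker m (u - (2 + m)⁻¹ • K) t K Q /
        (‖t‖ ^ 2 * √(ellm m t K Q))) =
      ∫⁻ v : R3, ENNReal.ofReal (shiftedKernel m u ‖K‖ Q v) *
        ENNReal.ofReal (‖v - (2 + m)⁻¹ • K‖ ^ 2)⁻¹ := by
  rw [← lintegral_sub_right_eq_self _ ((2 + m)⁻¹ • K)]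
  refine lintegral_congr fun v => ?_
  rw [← ENNReal.ofReal_mul (shiftedKernel_nonneg hm u v _ hQ), ellm_sub_smul hm, Dker,
    shiftedKernel, sub_add_cancel, sub_add_cancel]
  congr 1
  rw [mul_comm (‖_‖ ^ 2), ← div_div, div_eq_mul_inv _ (‖_‖ ^ 2)]

/-- Turning `K` so that it is antiparallel to `u` increases the integral. -/
lemma lintegral_shiftedKernel_le {m : ℝ} (hm : 0 < m) {u a b : R3} (k : ℝ) {Q : ℝ} (hQ : 0 < Q)
    (hab : ‖a‖ = ‖b‖) {c : ℝ} (hb : b = c • u) :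
    ∫⁻ v : R3, ENNReal.ofReal (shiftedKernel m u k Q v) * ENNReal.ofReal (‖v - a‖ ^ 2)⁻¹ ≤
      ∫⁻ v : R3, ENNReal.ofReal (shiftedKernel m u k Q v) *
        ENNReal.ofReal (‖v - b‖ ^ 2)⁻¹ := by
  set R : R3 ≃ₗᵢ[ℝ] R3 := (ℝ ∙ (a - b))ᗮ.reflection with hRdef
  have hR (v : R3) : R (R v) = v := Submodule.reflection_reflection _ v
  have hRa : R a = b := Submodule.reflection_sub hab
  have hnorm (v : R3) : ‖R v - b‖ = ‖v - a‖ := by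
    rw [← hRa, ← map_sub, R.norm_map]
  have key := lintegral_mul_comp_le_of_even R hR
    (f := fun v => ENNReal.ofReal (shiftedKernel m u k Q v))
    (g := fun v => ENNReal.ofReal (‖v - b‖ ^ 2)⁻¹)
    (measurable_shiftedKernel m u k Q).ennreal_ofReal (by fun_prop)
    (fun v => by simp only [shiftedKernel_neg]) ?_
  · simpa only [hnorm] using key
  have hfin : ({b, -b, a, -a} : Set R3).Finite := by simp
  filter_upwards [compl_mem_ae_iff.2 (hfin.measure_zero volume)] with v hv
  simp only [Set.mem_compl_iff, Set.mem_insert_iff, Set.mem_singleton_iff, not_or] at hv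
  obtain ⟨h₁, h₂, h₃, h₄⟩ := hv
  have h₂' : -v ≠ b := fun h => h₂ (by rw [← h, neg_neg])
  have h₃' : R v ≠ b := fun h => h₃ (by rw [← hR v, h, ← hRa, hR])
  have h₄' : -R v ≠ b := fun h => h₄ (by
    rw [← hR v, ← neg_neg (R v), h, ← hRa, map_neg, hR])
  have hinner (x : R3) : |⟪b, x⟫_ℝ| = |c| * |⟪u, x⟫_ℝ| := by
    rw [hb, real_inner_smul_left, abs_mul]
  have comb {x y : ℝ} (hy : 0 ≤ y) (hx : 0 ≤ x) :
      ENNReal.ofReal x + ENNReal.ofReal y = ENNReal.ofReal (x + y) :=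
    (ENNReal.ofReal_add hx hy).symm
  rw [comb (by positivity) (by positivity), comb (by positivity) (by positivity)]
  rcases le_total |⟪u, v⟫_ℝ| |⟪u, R v⟫_ℝ| with h | h
  · refine Or.inl ⟨ENNReal.ofReal_le_ofReal (shiftedKernel_le hm k hQ (R.norm_map v).symm h),
      ENNReal.ofReal_le_ofReal (inv_sq_dist_add_le (R.norm_map v).symm ?_ h₁ h₂' h₃' h₄')⟩
    rw [hinner, hinner]
    gcongr
  · refine Or.inr ⟨ENNReal.ofReal_le_ofReal (shiftedKernel_le hm k hQ (R.norm_map v) h),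
      ENNReal.ofReal_le_ofReal (inv_sq_dist_add_le (R.norm_map v) ?_ h₃' h₄' h₁ h₂')⟩
    rw [hinner, hinner]
    gcongr

/-- The quantity whose supremum is `Λ(m)`. -/
def LamTerm (m : ℝ) (s K : R3) (Q : ℝ) : ℝ≥0∞ :=
  ENNReal.ofReal ((‖s‖ ^ 2 + Q ^ 2) / (π ^ 2 * (1 + m)) / √(ellm m s K Q)) *
    ∫⁻ t : R3, ENNReal.ofReal (Dker m s t K Q / (‖t‖ ^ 2 * √(ellm m t K Q)))

lemma exists_antiparallel_LamTerm_le {m : ℝ} (hm : 0 < m) (s K : R3) {Q : ℝ} (hQ : 0 < Q) :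
    ∃ (s' : R3) (b : ℝ), 0 ≤ b ∧ b ≤ 2 + m ∧ LamTerm m s K Q ≤ LamTerm m s' (-b • s') Q := by
  obtain ⟨u, rfl⟩ : ∃ u : R3, s = u - (2 + m)⁻¹ • K := ⟨s + (2 + m)⁻¹ • K, by simp⟩
  rcases eq_or_ne u 0 with rfl | hu
  · refine ⟨0, 0, le_rfl, by linarith, ?_⟩
    rw [LamTerm, lintegral_eq_shiftedKernel hm _ _ hQ]
    simp [shiftedKernel]
  have hu' : 0 < ‖u‖ := norm_pos_iff.2 hu
  set r := ‖K‖ / ‖u‖ with hr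
  have hr0 : 0 ≤ r := by positivity
  set K' : R3 := -r • u with hK'
  have hKK' : ‖K‖ = ‖K'‖ := by
    rw [hK', norm_smul, norm_neg, Real.norm_eq_abs, abs_of_nonneg hr0, hr,
      div_mul_cancel₀ _ hu'.ne']
  have hpos : 0 < 1 + (2 + m)⁻¹ * r := by positivity
  have hs' : u - (2 + m)⁻¹ • K' = (1 + (2 + m)⁻¹ * r) • u := by
    rw [hK', smul_smul, mul_neg, neg_smul, sub_neg_eq_add, add_smul, one_smul]
  refine ⟨u - (2 + m)⁻¹ • K', r / (1 + (2 + m)⁻¹ * r), by positivity, ?_, ?_⟩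
  · rw [div_le_iff₀ hpos]
    field_simp
    linarith
  have hbs : -(r / (1 + (2 + m)⁻¹ * r)) • (u - (2 + m)⁻¹ • K') = K' := by
    rw [hs', smul_smul, neg_mul, div_mul_cancel₀ _ hpos.ne', hK']
  rw [hbs, LamTerm, LamTerm, lintegral_eq_shiftedKernel hm _ _ hQ,
    lintegral_eq_shiftedKernel hm _ _ hQ, ellm_sub_smul hm, ellm_sub_smul hm, ← hKK']
  have hnorm : ‖u - (2 + m)⁻¹ • K‖ ≤ ‖u - (2 + m)⁻¹ • K'‖ := by
    refine (norm_sub_le _ _).trans_eq ?_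
    rw [hs', norm_smul, norm_smul, Real.norm_of_nonneg hpos.le,
      Real.norm_of_nonneg (by positivity), hr]
    field_simp
  gcongr ?_ * ?_
  · gcongr
  · refine lintegral_shiftedKernel_le hm _ hQ ?_ (c := (2 + m)⁻¹ * -r) ?_
    · rw [norm_smul, norm_smul, hKK']
    · rw [hK', smul_smul]

/-- the supremum defining `Λ(m)` is unchanged when restricted to
configurations with `K = -b·s`, `0 ≤ b ≤ 2+m`. -/
theorem Lam_eq_sup_antiparallel (m : ℝ) (hm : 0 < m) :
    Lam m = ⨆ (s : R3) (b : ℝ) (_ : 0 ≤ b) (_ : b ≤ 2 + m) (Q : ℝ) (_ : 0 < Q),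
      ENNReal.ofReal ((‖s‖ ^ 2 + Q ^ 2) / (π ^ 2 * (1 + m))
          / Real.sqrt (ellm m s (-b • s) Q)) *
        ∫⁻ t : R3, ENNReal.ofReal
          (Dker m s t (-b • s) Q / (‖t‖ ^ 2 * Real.sqrt (ellm m t (-b • s) Q))) := by
  refine le_antisymm ?_ ?_
  · refine iSup_le fun s => iSup_le fun K => iSup_le fun Q => iSup_le fun hQ => ?_
    obtain ⟨s', b, hb₀, hb, h⟩ := exists_antiparallel_LamTerm_le hm s K hQ
    exact le_iSup_of_le s' (le_iSup_of_le b (le_iSup_of_le hb₀ (le_iSup_of_le hb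
      (le_iSup_of_le Q (le_iSup_of_le hQ h)))))
  · refine iSup_le fun s => iSup_le fun b => iSup_le fun _ => iSup_le fun _ =>
      iSup_le fun Q => iSup_le fun hQ => ?_
    exact le_iSup_of_le s (le_iSup_of_le (-b • s) (le_iSup_of_le Q (le_iSup_of_le hQ le_rfl)))
end
end
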